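/- arXiv:2405.09242 — 2 statements merged into one kernel-verified Lean document; each statement's English description precedes it below -/
import Mathlib

section
/- For every K ⊆ [n-1], Σ_{v ∈ W(K)} t^{des(v)} = Σ_{w ∈ W̃^K} t^{des(w)} (1+t)^{n-1-2·des(w)}, where W̃^K is the set of minimal-length coset representatives of W_K in S_n having no double descent and no initial descent. -/
open Finset Polynomial

open scoped Classical

noncomputable section

/-- The letter (0-based) at 0-based position `i` in the one-line notation of `w`
(junk value `0` out of range). -/
def ol (n : ℕ) (w : Equiv.Perm (Fin n)) (i : ℕ) : ℕ :=
  if h : i < n then (w ⟨i, h⟩ : ℕ) else 0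

/-- The descent set of `w`, with 0-based positions: `i ∈ DesSet n w` (for `i ≤ n-2`)
means `w(i) > w(i+1)`.  (This is the paper's descent `i+1 ∈ [n-1]`.) -/
def DesSet (n : ℕ) (w : Equiv.Perm (Fin n)) : Finset ℕ :=
  (Finset.range (n - 1)).filter fun i => ol n w (i + 1) < ol n w i

/-- The number of descents of `w`. -/
def des (n : ℕ) (w : Equiv.Perm (Fin n)) : ℕ := (DesSet n w).card

/-- `w` has no double descent: no two consecutive descent positions. -/
def NoDoubleDescent (n : ℕ) (w : Equiv.Perm (Fin n)) : Prop :=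
  ∀ i ∈ DesSet n w, i + 1 ∉ DesSet n w

/-- `w` has no initial descent (no descent at the first position). -/
def NoInitialDescent (n : ℕ) (w : Equiv.Perm (Fin n)) : Prop := 0 ∉ DesSet n w

/-- `w` has no final descent (no descent at the last position, paper's `n-1`). -/
def NoFinalDescent (n : ℕ) (w : Equiv.Perm (Fin n)) : Prop := n - 2 ∉ DesSet n w

/-- The involution `w ↦ w*`, `w*(i) = n+1-w(n+1-i)` in 1-based notation. -/
def starPerm (n : ℕ) (w : Equiv.Perm (Fin n)) : Equiv.Perm (Fin n) :=
  (Fin.revPerm.trans w).trans Fin.revPerm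

/-- The letter at 1-based position `i ∈ [1,n]` of `w`, as an element of `ℕ∞`,
with the boundary convention `w(0) = w(n+1) = ⊤`. -/
def olb (n : ℕ) (w : Equiv.Perm (Fin n)) (i : ℕ) : ℕ∞ :=
  if h : 1 ≤ i ∧ i ≤ n then ((w ⟨i - 1, by omega⟩ : ℕ) : ℕ∞) else ⊤

/-- 1-based position `i` is a peak of `w` : `w(i-1) < w(i) > w(i+1)` (boundaries `⊤`,
so positions `1` and `n` are never peaks). -/
def IsPeak (n : ℕ) (w : Equiv.Perm (Fin n)) (i : ℕ) : Prop :=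
  olb n w (i - 1) < olb n w i ∧ olb n w (i + 1) < olb n w i

/-- 1-based position `i` is a valley of `w` : `w(i-1) > w(i) < w(i+1)`. -/
def IsValley (n : ℕ) (w : Equiv.Perm (Fin n)) (i : ℕ) : Prop :=
  olb n w i < olb n w (i - 1) ∧ olb n w i < olb n w (i + 1)

/-- 1-based position `i` holds a free letter of `w` : neither a peak nor a valley. -/
def IsFree (n : ℕ) (w : Equiv.Perm (Fin n)) (i : ℕ) : Prop :=
  ¬ IsPeak n w i ∧ ¬ IsValley n w i

/-- The number of peaks of `w`. -/
def pk (n : ℕ) (w : Equiv.Perm (Fin n)) : ℕ :=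
  ((Finset.Icc 1 n).filter (IsPeak n w)).card

/-- The number of inversions of `w`, i.e. its Coxeter length. -/
def invNum (n : ℕ) (w : Equiv.Perm (Fin n)) : ℕ :=
  (Finset.univ.filter fun p : Fin n × Fin n => p.1 < p.2 ∧ w p.2 < w p.1).card

/-- The standard parabolic subgroup `W_K` of `S_n` generated by the adjacent
transpositions `(k, k+1)` (1-based letters `k ∈ K`, i.e. 0-based `k-1`, `k`). -/
def WK (n : ℕ) (K : Finset ℕ) : Subgroup (Equiv.Perm (Fin n)) :=
  Subgroup.closure { s | ∃ k ∈ K, ∃ hk : k < n,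
    s = Equiv.swap (⟨k - 1, lt_of_le_of_lt (Nat.sub_le k 1) hk⟩ : Fin n) ⟨k, hk⟩ }

/-- The set `W^K` of permutations in which, for every `k ∈ K`, the letter `k`
appears before the letter `k+1` (1-based letters; these are the minimal-length
coset representatives of `W_K`). -/
def WKreps (n : ℕ) (K : Finset ℕ) : Finset (Equiv.Perm (Fin n)) :=
  Finset.univ.filter fun w => ∀ k ∈ K, ∀ hk : k < n,
    w⁻¹ (⟨k - 1, lt_of_le_of_lt (Nat.sub_le k 1) hk⟩ : Fin n) < w⁻¹ ⟨k, hk⟩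

/-- The set `W(K) = { v ∈ S_n : v⁻¹(k) − v⁻¹(k+1) ≤ 1 for all k ∈ K }`
(1-based letters `k`, `k+1`). -/
def Wset (n : ℕ) (K : Finset ℕ) : Finset (Equiv.Perm (Fin n)) :=
  Finset.univ.filter fun v => ∀ k ∈ K, ∀ hk : k < n,
    ((v⁻¹ (⟨k - 1, lt_of_le_of_lt (Nat.sub_le k 1) hk⟩ : Fin n) : Fin n) : ℕ) ≤
      ((v⁻¹ (⟨k, hk⟩ : Fin n) : Fin n) : ℕ) + 1

/-- The orbit of `i` under the action of `W_K` on positions/letters. -/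
def orbitFinset (n : ℕ) (K : Finset ℕ) (i : Fin n) : Finset (Fin n) :=
  Finset.univ.filter fun j => ∃ u ∈ WK n K, u i = j

/-- The set of orbits of `W_K` on `[n]`. -/
def orbitsFinset (n : ℕ) (K : Finset ℕ) : Finset (Finset (Fin n)) :=
  Finset.univ.image (orbitFinset n K)

/-- The one-line notation of `w` as a list of (0-based) letters. -/
def word (n : ℕ) (w : Equiv.Perm (Fin n)) : List ℕ := List.ofFn fun i => (w i : ℕ)

/-- A single valley hop of the free letter `j` from a downslope (in `v`) to the
nearest upslope of the same height (giving `u`): `j` moves rightwards directly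
across the adjacent valley `B`. -/
def hopStep (v u : List ℕ) : Prop :=
  ∃ (A B C : List ℕ) (j : ℕ), B ≠ [] ∧ (∀ x ∈ B, x < j) ∧
    (∀ x ∈ A.getLast?, j < x) ∧ (∀ x ∈ C.head?, j < x) ∧
    v = A ++ j :: (B ++ C) ∧ u = A ++ (B ++ j :: C)

/-- Hop equivalence (valley hopping) on `S_n`: the equivalence closure of single
hops of free letters. -/
def hopEquiv (n : ℕ) (a b : Equiv.Perm (Fin n)) : Prop :=
  Relation.EqvGen (fun x y : Equiv.Perm (Fin n) => hopStep (word n x) (word n y)) a b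

/-- The index (1-based) of the `W_K`-orbit containing the letter `x ∈ [1,n]`:
orbits are consecutive intervals, numbered from the left. -/
def orbIdx (K : Finset ℕ) (x : ℕ) : ℕ :=
  1 + ((Finset.Icc 1 (x - 1)).filter fun t => t ∉ K).card

/-- The (0-based) descent set of a word `v` of length `n`. -/
def wdes (n : ℕ) (v : Fin n → ℕ) : Finset ℕ :=
  (Finset.range (n - 1)).filter fun i =>
    if h : i + 1 < n then v ⟨i + 1, h⟩ < v ⟨i, by omega⟩ else False

/-- The word `v` has content `μ(K)`: for each `i`, the number of letters of `v`
equal to `i` is the size of the `i`-th orbit of `W_K` on `[1,n]`. -/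
def HasContent (n : ℕ) (K : Finset ℕ) (v : Fin n → ℕ) : Prop :=
  ∀ i : ℕ, (Finset.univ.filter fun j => v j = i).card =
    ((Finset.Icc 1 n).filter fun x => orbIdx K x = i).card

/-- `w` is the standardization `φ(v)` of the word `v`: `w` orders positions by
letter value, breaking ties from left to right.  (This is exactly the map `φ`
of the paper: if `j` is the `k`-th smallest position with `v(j) = i`, then
`φ(v)(j) = k + μ₁ + ⋯ + μ_{i-1}`.) -/
def IsStd (n : ℕ) (v : Fin n → ℕ) (w : Equiv.Perm (Fin n)) : Prop :=
  ∀ j j' : Fin n, w j < w j' ↔ (v j < v j' ∨ (v j = v j' ∧ j < j'))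


/-! ### Weights of words -/

/-- Content of a word. -/
def ctn (l : List ℕ) : ℕ →₀ ℕ := Multiset.toFinsupp (l : Multiset ℕ)

/-- The finite set of words with a given content. -/
def LS (μ : ℕ →₀ ℕ) : Finset (List ℕ) := (Finsupp.toMultiset μ).lists.toFinset

lemma mem_LS (μ : ℕ →₀ ℕ) (l : List ℕ) : l ∈ LS μ ↔ ctn l = μ := by
  unfold LS ctn
  rw [Multiset.mem_toFinset, Multiset.mem_lists_iff]
  constructor
  · intro h
    have h' : Finsupp.toMultiset μ = (l : Multiset ℕ) := h
    rw [← h']; simp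
  · intro h
    rw [← h]; simp

lemma ctn_append (a b : List ℕ) : ctn (a ++ b) = ctn a + ctn b := by
  unfold ctn
  rw [← Multiset.coe_add, Multiset.toFinsupp_add]

section gf

variable {R : Type*} [CommRing R]

/-- The generating function of a weight on words. -/
def Ser (φ : List ℕ → R) : MvPowerSeries ℕ R := fun μ => ∑ l ∈ LS μ, φ l

lemma coeff_Ser (φ : List ℕ → R) (μ : ℕ →₀ ℕ) :
    MvPowerSeries.coeff μ (Ser φ) = ∑ l ∈ LS μ, φ l := rfl

lemma Ser_add (φ ψ : List ℕ → R) : Ser (fun l => φ l + ψ l) = Ser φ + Ser ψ := by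
  ext μ
  rw [map_add, coeff_Ser, coeff_Ser, coeff_Ser, Finset.sum_add_distrib]

lemma Ser_smul (c : R) (φ : List ℕ → R) :
    Ser (fun l => c * φ l) = MvPowerSeries.C c * Ser φ := by
  ext μ
  rw [MvPowerSeries.coeff_C_mul, coeff_Ser, coeff_Ser, Finset.mul_sum]

/-- Convolution over splittings. -/
def conv (φ ψ : List ℕ → R) (l : List ℕ) : R :=
  ∑ i ∈ Finset.range (l.length + 1), φ (l.take i) * ψ (l.drop i)

lemma Ser_mul (φ ψ : List ℕ → R) : Ser φ * Ser ψ = Ser (conv φ ψ) := by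
  ext μ
  rw [@MvPowerSeries.coeff_mul ℕ R _ μ _ _ instDecidableEqNat, coeff_Ser]
  simp only [coeff_Ser, Finset.sum_mul_sum, conv]
  simp only [← Finset.sum_product']
  rw [Finset.sum_sigma', Finset.sum_sigma']
  refine Finset.sum_bij' (fun x _ => ⟨x.2.1 ++ x.2.2, x.2.1.length⟩)
    (fun y _ => ⟨(ctn (y.1.take y.2), ctn (y.1.drop y.2)), (y.1.take y.2, y.1.drop y.2)⟩)
    ?_ ?_ ?_ ?_ ?_
  · rintro ⟨⟨a, b⟩, ⟨l1, l2⟩⟩ h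
    simp only [Finset.mem_sigma, Finset.HasAntidiagonal.mem_antidiagonal, Finset.mem_product, mem_LS,
      Finset.mem_range] at h ⊢
    obtain ⟨h1, h2, h3⟩ := h
    refine ⟨by rw [ctn_append, h2, h3, h1], by simp⟩
  · rintro ⟨l, i⟩ h
    simp only [Finset.mem_sigma, Finset.HasAntidiagonal.mem_antidiagonal, Finset.mem_product, mem_LS,
      Finset.mem_range] at h ⊢
    refine ⟨by rw [← ctn_append, List.take_append_drop]; exact h.1, trivial, trivial⟩
  · rintro ⟨⟨a, b⟩, ⟨l1, l2⟩⟩ h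
    simp only [Finset.mem_sigma, Finset.HasAntidiagonal.mem_antidiagonal, Finset.mem_product, mem_LS] at h
    obtain ⟨h1, h2, h3⟩ := h
    subst h2 h3
    simp
  · rintro ⟨l, i⟩ h
    simp only [Finset.mem_sigma, Finset.mem_range] at h
    simp
    omega
  · rintro ⟨⟨a, b⟩, ⟨l1, l2⟩⟩ h
    simp

/-- restrict a weight to words with all letters `< m`. -/
def low (m : ℕ) (φ : List ℕ → R) (l : List ℕ) : R := if ∀ x ∈ l, x < m then φ l else 0

/-- restrict a weight to words beginning with `m` and all letters `≤ m`. -/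
def top (m : ℕ) (φ : List ℕ → R) (l : List ℕ) : R :=
  if l.head? = some m ∧ ∀ x ∈ l, x < m + 1 then φ l else 0

lemma split_cases (m : ℕ) (l : List ℕ) : (∀ x ∈ l, x < m) ∨
    (∃ x ∈ l, m < x) ∨ ∃ u r, (∀ x ∈ u, x < m) ∧ (∀ x ∈ r, x < m + 1) ∧ l = u ++ m :: r := by
  induction l with
  | nil => left; simp
  | cons a l ih =>
    rcases lt_trichotomy a m with h | h | h
    · rcases ih with h' | ⟨x, hx, h'⟩ | ⟨u, r, hu, hr, rfl⟩
      · left; simpa [h] using h'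
      · right; left; exact ⟨x, by simp [hx], h'⟩
      · right; right; exact ⟨a :: u, r, by simpa [h] using hu, hr, rfl⟩
    · by_cases h' : ∃ x ∈ l, m < x
      · obtain ⟨x, hx, h'⟩ := h'
        right; left; exact ⟨x, by simp [hx], h'⟩
      · right; right
        push Not at h'
        exact ⟨[], l, by simp, fun x hx => Nat.lt_succ_of_le (h' x hx), by simp [h]⟩
    · right; left; exact ⟨a, by simp, h⟩

/-- Decomposition at the first occurrence of the largest letter. -/
lemma Ser_split (m : ℕ) (χ φ ψ : List ℕ → R)
    (h : ∀ u r, (∀ x ∈ u, x < m) → (∀ x ∈ r, x < m + 1) →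
      χ (u ++ m :: r) = φ u * ψ (m :: r)) :
    Ser (low (m + 1) χ) = Ser (low m χ) + Ser (low m φ) * Ser (top m ψ) := by
  rw [Ser_mul, ← Ser_add]
  congr 1
  funext l
  rcases split_cases m l with h1 | ⟨x, hx, hm⟩ | ⟨u, r, hu, hr, rfl⟩
  · have e1 : low (m + 1) χ l = χ l := if_pos fun x hx => Nat.lt_succ_of_lt (h1 x hx)
    have e2 : low m χ l = χ l := if_pos h1
    have e3 : conv (low m φ) (top m ψ) l = 0 := by
      unfold conv
      apply Finset.sum_eq_zero
      intro i _
      have : top m ψ (l.drop i) = 0 := by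
        apply if_neg
        rintro ⟨ha, _⟩
        have := h1 m (List.mem_of_mem_drop (List.mem_of_head? ha))
        omega
      rw [this, mul_zero]
    rw [e1, e2, e3, add_zero]
  · have e1 : low (m + 1) χ l = 0 := if_neg fun h => by have := h x hx; omega
    have e2 : low m χ l = 0 := if_neg fun h => by have := h x hx; omega
    have e3 : conv (low m φ) (top m ψ) l = 0 := by
      unfold conv
      apply Finset.sum_eq_zero
      intro i _
      rw [← List.take_append_drop i l, List.mem_append] at hx
      rcases hx with hx | hx
      · have : low m φ (l.take i) = 0 := if_neg fun h => by have := h x hx; omega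
        rw [this, zero_mul]
      · have : top m ψ (l.drop i) = 0 := if_neg fun h => by have := h.2 x hx; omega
        rw [this, mul_zero]
    rw [e1, e2, e3, add_zero]
  · have e1 : low (m + 1) χ (u ++ m :: r) = χ (u ++ m :: r) := by
      apply if_pos
      intro x hx
      simp only [List.mem_append, List.mem_cons] at hx
      rcases hx with hx | rfl | hx
      · have := hu x hx; omega
      · omega
      · exact hr x hx
    have e2 : low m χ (u ++ m :: r) = 0 := if_neg fun h => by have := h m (by simp); omega
    have e3 : conv (low m φ) (top m ψ) (u ++ m :: r) = φ u * ψ (m :: r) := by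
      unfold conv
      rw [Finset.sum_eq_single u.length]
      · have f1 : low m φ u = φ u := if_pos hu
        have f2 : top m ψ (m :: r) = ψ (m :: r) := by
          apply if_pos
          refine ⟨rfl, ?_⟩
          intro x hx
          simp only [List.mem_cons] at hx
          rcases hx with rfl | hx
          · omega
          · exact hr x hx
        simp [f1, f2]
      · intro i hi hne
        rcases lt_or_gt_of_ne hne with hlt | hgt
        · have : top m ψ ((u ++ m :: r).drop i) = 0 := by
            apply if_neg
            rintro ⟨ha, _⟩
            rw [List.drop_append_of_le_length hlt.le] at ha
            rw [List.drop_eq_getElem_cons hlt] at ha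
            have ha' : u[i] = m := by
              simpa only [List.cons_append, List.head?_cons, Option.some.injEq] using ha
            have := hu _ (List.getElem_mem hlt)
            omega
          rw [this, mul_zero]
        · have : low m φ ((u ++ m :: r).take i) = 0 := by
            apply if_neg
            intro hh
            obtain ⟨j, hj⟩ : ∃ j, i = u.length + (j + 1) := ⟨i - u.length - 1, by omega⟩
            have := hh m (by rw [hj, List.take_length_add_append]; simp)
            omega
          rw [this, zero_mul]
      · intro hh
        simp at hh
    rw [e1, e2, e3, zero_add, h u r hu hr]

lemma ctn_eq_single (m : ℕ) (l : List ℕ) : ctn l = Finsupp.single m 1 ↔ l = [m] := by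
  unfold ctn
  constructor
  · intro h
    have : (l : Multiset ℕ) = ({m} : Multiset ℕ) := by
      apply Multiset.toFinsupp.injective
      rw [h, Multiset.toFinsupp_singleton]
    simpa using this
  · rintro rfl
    rw [Multiset.coe_singleton, Multiset.toFinsupp_singleton]

lemma Ser_single (m : ℕ) : Ser (fun l => if l = [m] then (1 : R) else 0) = MvPowerSeries.X m := by
  ext μ
  rw [coeff_Ser, MvPowerSeries.coeff_X]
  by_cases h : μ = Finsupp.single m 1
  · rw [if_pos h, Finset.sum_eq_single [m]]
    · simp
    · intro b _ hb; simp [hb]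
    · intro hh
      exact absurd ((mem_LS _ _).2 (by rw [h]; exact (ctn_eq_single m _).2 rfl)) hh
  · rw [if_neg h]
    apply Finset.sum_eq_zero
    intro l hl
    apply if_neg
    rintro rfl
    apply h
    rw [← (mem_LS _ _).1 hl]
    exact (ctn_eq_single m _).2 rfl

lemma Ser_one : Ser (fun l => if l = [] then (1 : R) else 0) = 1 := by
  ext μ
  rw [coeff_Ser, MvPowerSeries.coeff_one]
  have key : ∀ l : List ℕ, ctn l = 0 ↔ l = [] := by
    intro l
    unfold ctn
    rw [← Multiset.toFinsupp_zero (α := ℕ)]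
    rw [Multiset.toFinsupp.injective.eq_iff]
    simp
  by_cases h : μ = 0
  · rw [if_pos h, Finset.sum_eq_single []]
    · simp
    · intro b _ hb; simp [hb]
    · intro hh
      exact absurd ((mem_LS _ _).2 (by rw [h]; exact (key _).2 rfl)) hh
  · rw [if_neg h]
    apply Finset.sum_eq_zero
    intro l hl
    apply if_neg
    rintro rfl
    apply h
    rw [← (mem_LS _ _).1 hl]
    exact (key _).2 rfl

/-- Removing an initial letter `m`. -/
lemma Ser_top (m : ℕ) (ψ : List ℕ → R) :
    Ser (top m ψ) = MvPowerSeries.X m * Ser (low (m + 1) (fun r => ψ (m :: r))) := by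
  rw [← Ser_single, Ser_mul]
  congr 1
  funext l
  unfold conv
  cases l with
  | nil => simp [top]
  | cons a r =>
    rw [Finset.sum_eq_single 1]
    · by_cases h : a = m
      · subst h; simp [top, low]
      · simp [top, h]
    · intro i hi hne
      have : ¬ ((a :: r).take i = [m]) := by
        intro h
        have := congrArg List.length h
        simp at this hi
        omega
      simp [this]
    · intro h; simp at h

variable (t : R)

/-- Weight `t ^ des * (1 + t) ^ plat`. -/
def wA : List ℕ → R
  | [] => 1
  | [_] => 1
  | a :: b :: l => (if b < a then t else if b = a then 1 + t else 1) * wA (b :: l)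

/-- Canonical weights (`c1 = cc true`, after a descent or at the start; `c0 = cc false`). -/
def cc : Bool → List ℕ → R
  | _, [] => 0
  | true, [_] => 1
  | false, [_] => 1 + t
  | true, a :: b :: l => if b < a then 0 else cc false (b :: l)
  | false, a :: b :: l => if b < a then t * cc true (b :: l) else (1 + t) * cc false (b :: l)

lemma wA_append (m : ℕ) (r : List ℕ) : ∀ u : List ℕ, (∀ x ∈ u, x < m) →
    wA t (u ++ m :: r) = wA t u * wA t (m :: r)
  | [], _ => by simp [wA]
  | [a], h => by
    have : a < m := h a (by simp)
    simp [wA, show ¬ m < a by omega, show m ≠ a by omega]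
  | a :: b :: l, h => by
    have := wA_append m r (b :: l) (fun x hx => h x (by simp at hx ⊢; tauto))
    simp only [List.cons_append, wA] at this ⊢
    rw [this]; ring

lemma cc_append (m : ℕ) (r : List ℕ) : ∀ (s : Bool) (u : List ℕ), u ≠ [] → (∀ x ∈ u, x < m) →
    cc t s (u ++ m :: r) = cc t s u * cc t false (m :: r)
  | s, [], h, _ => by simp at h
  | s, [a], _, h => by
    have : a < m := h a (by simp)
    cases s <;> simp [cc, show ¬ m < a by omega]
  | s, a :: b :: l, _, h => by
    have := fun s => cc_append m r s (b :: l) (by simp) (fun x hx => h x (by simp at hx ⊢; tauto))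
    simp only [List.cons_append] at this ⊢
    cases s
    · simp only [cc, this]; split_ifs <;> ring
    · simp only [cc, this]; split_ifs <;> ring

/-- Generating function of nonempty words, letters `< m`. -/
def fA (m : ℕ) : MvPowerSeries ℕ R := Ser (low m (fun l => if l = [] then 0 else wA t l))

/-- Generating function of canonical words, letters `< m`. -/
def gC (m : ℕ) : MvPowerSeries ℕ R := Ser (low m (cc t true))

lemma Ser_low_aux (m : ℕ) (c d : R) (φ : List ℕ → R) (h0 : φ [] = 0) (χ : List ℕ → R)
    (h : ∀ u, (∀ x ∈ u, x < m) → χ u = if u = [] then c else d * φ u) :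
    Ser (low m χ) = MvPowerSeries.C c + MvPowerSeries.C d * Ser (low m φ) := by
  rw [← mul_one (MvPowerSeries.C c), ← Ser_one, ← Ser_smul, ← Ser_smul, ← Ser_add]
  congr 1
  funext l
  unfold low
  by_cases hl : ∀ x ∈ l, x < m
  · rw [if_pos hl, if_pos hl, h l hl]
    by_cases e : l = [] <;> simp [e, h0]
  · rw [if_neg hl, if_neg hl]
    have : l ≠ [] := by rintro rfl; simp at hl
    simp [this]

lemma main_alg {S : Type*} [CommRing S] (t f z P Q H H' : S) (hu : IsUnit (1 - (1 + t + t * f) * z))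
    (hP : P = (1 + t * f) + (1 + t + t * f) * (z * P))
    (hQ : Q = (1 + t + t * f) + (1 + t + t * f) * (z * Q))
    (hH : 1 + H = (1 + f) + (1 + f) * (z * P))
    (hH' : H' = f + f * (z * Q) + z * (1 + z * Q)) : H = H' := by
  have e1 : P * (1 - (1 + t + t * f) * z) = 1 + t * f := by linear_combination hP
  have e2 : Q * (1 - (1 + t + t * f) * z) = 1 + t + t * f := by linear_combination hQ
  apply hu.mul_left_injective
  simp only
  linear_combination (1 - (1 + t + t * f) * z) * (hH - hH') + (1 + f) * z * e1 - (f * z + z * z) * e2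

lemma Ser_wA (m : ℕ) : Ser (low m (wA t)) = 1 + fA t m := by
  rw [Ser_low_aux m 1 1 (fun l => if l = [] then 0 else wA t l) (by simp)]
  · simp [fA]
  · intro u _
    by_cases e : u = [] <;> simp [e, wA]

lemma C_one_add : (MvPowerSeries.C (1 + t) : MvPowerSeries ℕ R) = 1 + MvPowerSeries.C t := by
  simp

theorem fA_eq_gC (m : ℕ) : fA t m = gC t m := by
  induction m with
  | zero =>
    unfold fA gC
    congr 1
    funext l
    cases l with
    | nil => simp [low, cc]
    | cons a l =>
      have : ¬ ∀ x ∈ a :: l, x < 0 := fun h => by have := h a (by simp); omega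
      rw [low, low, if_neg this, if_neg this]
  | succ m ih =>
    have hH : 1 + fA t (m + 1) = (1 + fA t m) + (1 + fA t m) *
        (MvPowerSeries.X m * Ser (low (m + 1) (fun r => wA t (m :: r)))) := by
      rw [← Ser_wA, Ser_split m (wA t) (wA t) (wA t), Ser_top, Ser_wA]
      intro u r hu hr
      exact wA_append t m r u hu
    have hP : Ser (low (m + 1) (fun r => wA t (m :: r))) =
        (1 + MvPowerSeries.C t * fA t m) + (1 + MvPowerSeries.C t + MvPowerSeries.C t * fA t m) *
        (MvPowerSeries.X m * Ser (low (m + 1) (fun r => wA t (m :: r)))) := by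
      conv_lhs => rw [Ser_split m (fun r => wA t (m :: r))
        (fun u => if u = [] then 1 + t else t * wA t u) (wA t) (by
          intro u r hu hr
          cases u with
          | nil => simp [wA]
          | cons a u =>
            have ha := hu a (by simp)
            have := wA_append t m r (a :: u) hu
            simp only [List.cons_append] at this ⊢
            simp only [wA, if_pos ha, this, reduceCtorEq, if_false]
            ring)]
      rw [Ser_top]
      rw [Ser_low_aux m 1 t (fun l => if l = [] then 0 else wA t l) (by simp)
        (fun r => wA t (m :: r)),
        Ser_low_aux m (1 + t) t (fun l => if l = [] then 0 else wA t l) (by simp)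
        (fun u => if u = [] then 1 + t else t * wA t u), C_one_add,
        map_one]
      · rfl
      · intro u hu
        by_cases e : u = [] <;> simp [e]
      · intro u hu
        cases u with
        | nil => simp [wA]
        | cons a u =>
          have ha := hu a (by simp)
          simp [wA, ha]
    have hQ : Ser (low (m + 1) (fun r => cc t false (m :: r))) =
        (1 + MvPowerSeries.C t + MvPowerSeries.C t * gC t m) +
        (1 + MvPowerSeries.C t + MvPowerSeries.C t * gC t m) *
        (MvPowerSeries.X m * Ser (low (m + 1) (fun r => cc t false (m :: r)))) := by
      conv_lhs => rw [Ser_split m (fun r => cc t false (m :: r))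
        (fun u => if u = [] then 1 + t else t * cc t true u) (cc t false) (by
          intro u r hu hr
          cases u with
          | nil => simp [cc]
          | cons a u =>
            have ha := hu a (by simp)
            have := cc_append t m r true (a :: u) (by simp) hu
            simp only [List.cons_append] at this ⊢
            simp only [cc, if_pos ha, this, reduceCtorEq, if_false]
            ring)]
      rw [Ser_top]
      rw [Ser_low_aux m (1 + t) t (cc t true) (by simp [cc])
        (fun r => cc t false (m :: r)),
        Ser_low_aux m (1 + t) t (cc t true) (by simp [cc])
        (fun u => if u = [] then 1 + t else t * cc t true u), C_one_add]
      · rfl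
      · intro u hu
        by_cases e : u = [] <;> simp [e]
      · intro u hu
        cases u with
        | nil => simp [cc]
        | cons a u =>
          have ha := hu a (by simp)
          simp [cc, ha]
    have hT : Ser (low (m + 1) (fun r => cc t true (m :: r))) =
        1 + MvPowerSeries.X m * Ser (low (m + 1) (fun r => cc t false (m :: r))) := by
      rw [Ser_split m (fun r => cc t true (m :: r))
        (fun u => if u = [] then 1 else 0) (cc t false) (by
          intro u r hu hr
          cases u with
          | nil => simp [cc]
          | cons a u =>
            have ha := hu a (by simp)
            simp [cc, ha]), Ser_top,
        Ser_low_aux m 1 0 (cc t true) (by simp [cc]) (fun r => cc t true (m :: r)),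
        Ser_low_aux m 1 0 (cc t true) (by simp [cc])
          (fun u => if u = [] then 1 else 0)]
      · simp
      · intro u hu
        simp
      · intro u hu
        cases u with
        | nil => simp [cc]
        | cons a u =>
          have ha := hu a (by simp)
          simp [cc, ha]
    have hH' : gC t (m + 1) = gC t m + gC t m *
        (MvPowerSeries.X m * Ser (low (m + 1) (fun r => cc t false (m :: r)))) +
        MvPowerSeries.X m *
          (1 + MvPowerSeries.X m * Ser (low (m + 1) (fun r => cc t false (m :: r)))) := by
      have e : low (m + 1) (cc t true) = fun l =>
          low (m + 1) (fun l => if l.head? = some m then 0 else cc t true l) l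
            + top m (cc t true) l := by
        funext l
        unfold low top
        by_cases h1 : ∀ x ∈ l, x < m + 1
        · by_cases h2 : l.head? = some m <;> simp [h2]
        · rw [if_neg h1, if_neg h1, if_neg (fun h => h1 h.2), add_zero]
      unfold gC
      rw [e, Ser_add, Ser_top, hT, Ser_split m _ (cc t true) (cc t false), Ser_top]
      · congr 3
        funext l
        unfold low
        by_cases h1 : ∀ x ∈ l, x < m
        · rw [if_pos h1, if_pos h1]
          apply if_neg
          intro h
          have := h1 m (List.mem_of_head? h)
          omega
        · rw [if_neg h1, if_neg h1]
      · intro u r hu hr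
        cases u with
        | nil => simp [cc]
        | cons a u =>
          have ha := hu a (by simp)
          rw [← cc_append t m r true _ (by simp) hu, if_neg]
          simp
          omega
    rw [← ih] at hQ hH'
    refine main_alg (MvPowerSeries.C t) (fA t m) (MvPowerSeries.X m) _ _ _ _ ?_ hP hQ hH hH'
    rw [MvPowerSeries.isUnit_iff_constantCoeff]
    simp

theorem sum_wA_eq (μ : ℕ →₀ ℕ) (hμ : μ ≠ 0) :
    ∑ l ∈ LS μ, wA t l = ∑ l ∈ LS μ, cc t true l := by
  obtain ⟨m, hm⟩ : ∃ m, ∀ x ∈ μ.support, x < m :=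
    ⟨μ.support.sup id + 1, fun x hx => Nat.lt_succ_of_le (Finset.le_sup (f := id) hx)⟩
  have h := congrArg (MvPowerSeries.coeff μ) (fA_eq_gC t m)
  unfold fA gC at h
  rw [coeff_Ser, coeff_Ser] at h
  have hl : ∀ l ∈ LS μ, ∀ x ∈ l, x < m := by
    intro l hl x hx
    apply hm
    rw [mem_LS] at hl
    rw [← hl]
    simpa [ctn] using hx
  have hn : ∀ l ∈ LS μ, l ≠ [] := by
    rintro l hl rfl
    rw [mem_LS] at hl
    apply hμ
    rw [← hl]
    simp [ctn]
  rw [Finset.sum_congr rfl (g := fun l => wA t l), Finset.sum_congr rfl (s₁ := LS μ)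
    (f := low m (cc t true)) (g := fun l => cc t true l)] at h
  · exact h
  · intro l h1
    exact if_pos (hl l h1)
  · intro l h1
    unfold low
    rw [if_pos (hl l h1)]
    exact if_neg (hn l h1)

end gf

/-! ### Permutations and words -/

/-- Orbit index of a `0`-based letter. -/
def orb (K : Finset ℕ) (x : ℕ) : ℕ := ((Finset.Icc 1 x).filter fun k => k ∉ K).card

lemma orb_mono (K : Finset ℕ) : Monotone (orb K) := by
  intro a b h
  exact Finset.card_le_card (Finset.filter_subset_filter _ (Finset.Icc_subset_Icc_right h))

lemma orb_succ (K : Finset ℕ) (x : ℕ) : orb K (x + 1) = orb K x + if x + 1 ∈ K then 0 else 1 := by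
  unfold orb
  rw [← Finset.insert_Icc_right_eq_Icc_add_one (by omega), Finset.filter_insert]
  by_cases h : x + 1 ∈ K
  · simp [h]
  · simp [h]

lemma orb_succ_eq (K : Finset ℕ) (x : ℕ) : orb K (x + 1) = orb K x ↔ x + 1 ∈ K := by
  rw [orb_succ]
  by_cases h : x + 1 ∈ K <;> simp [h]

/-- descents of a function. -/
def ds (u : ℕ → ℕ) (n : ℕ) : Finset ℕ := (Finset.range n).filter fun i => u (i + 1) < u i

/-- plateaus of a function. -/
def ps (u : ℕ → ℕ) (n : ℕ) : Finset ℕ := (Finset.range n).filter fun i => u (i + 1) = u i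

lemma range_map_succ (u : ℕ → ℕ) (n : ℕ) :
    (List.range (n + 1)).map u = u 0 :: (List.range n).map (fun i => u (i + 1)) := by
  rw [List.range_succ_eq_map]
  simp [Function.comp_def]

lemma range_map_succ2 (u : ℕ → ℕ) (n : ℕ) :
    (List.range (n + 2)).map u = u 0 :: u 1 :: (List.range n).map (fun i => u (i + 2)) := by
  rw [range_map_succ, range_map_succ]

lemma ds_card_succ (u : ℕ → ℕ) (n : ℕ) :
    (ds u (n + 1)).card = (ds (fun i => u (i + 1)) n).card + if u 1 < u 0 then 1 else 0 := by
  unfold ds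
  rw [Finset.card_filter, Finset.card_filter, Finset.sum_range_succ']

lemma mem_ds_zero (u : ℕ → ℕ) (n : ℕ) : 0 ∈ ds u (n + 1) ↔ u 1 < u 0 := by
  simp [ds]

lemma mem_ds_succ (u : ℕ → ℕ) (n i : ℕ) :
    i + 1 ∈ ds u (n + 1) ↔ i ∈ ds (fun i => u (i + 1)) n := by
  simp [ds]

section wts
variable {R : Type*} [CommRing R] (t : R)

lemma wA_range (n : ℕ) : ∀ u : ℕ → ℕ, wA t ((List.range (n + 1)).map u) =
    t ^ (ds u n).card * (1 + t) ^ (ps u n).card := by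
  suffices h : ∀ u : ℕ → ℕ, wA t ((List.range (n + 1)).map u) =
      ∏ i ∈ Finset.range n,
        (if u (i + 1) < u i then t else if u (i + 1) = u i then 1 + t else 1) by
    intro u
    rw [h u]
    have : ∀ i ∈ Finset.range n,
        (if u (i + 1) < u i then t else if u (i + 1) = u i then 1 + t else 1) =
        (if u (i + 1) < u i then t else 1) * (if u (i + 1) = u i then 1 + t else 1) := by
      intro i _
      split_ifs
      · omega
      · simp
      · simp
      · simp
    rw [Finset.prod_congr rfl this, Finset.prod_mul_distrib, ← Finset.prod_filter,
      ← Finset.prod_filter, Finset.prod_const, Finset.prod_const]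
    rfl
  induction n with
  | zero => intro u; simp [wA]
  | succ n ih =>
    intro u
    have := ih (fun i => u (i + 1))
    rw [range_map_succ] at this
    rw [range_map_succ2, wA, Finset.prod_range_succ', this, mul_comm]

/-- canonical condition -/
def canon (s : Bool) (u : ℕ → ℕ) (n : ℕ) : Prop :=
  (∀ i ∈ ds u n, i + 1 ∉ ds u n) ∧ (s = true → 0 ∉ ds u n)

lemma canon_desc (s : Bool) (u : ℕ → ℕ) (n : ℕ) (h : u 1 < u 0) :
    canon s u (n + 1) ↔ s = false ∧ canon true (fun i => u (i + 1)) n := by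
  unfold canon
  constructor
  · rintro ⟨h1, h2⟩
    refine ⟨?_, ?_, ?_⟩
    · cases s
      · rfl
      · exact absurd ((mem_ds_zero u n).2 h) (h2 rfl)
    · intro i hi
      rw [← mem_ds_succ] at hi ⊢
      exact h1 _ hi
    · intro _
      rw [← mem_ds_succ]
      exact h1 _ ((mem_ds_zero u n).2 h)
  · rintro ⟨rfl, h1, h2⟩
    refine ⟨?_, by simp⟩
    intro i hi
    rw [mem_ds_succ]
    cases i with
    | zero => exact h2 rfl
    | succ i =>
      rw [mem_ds_succ] at hi
      exact h1 _ hi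

lemma canon_asc (s : Bool) (u : ℕ → ℕ) (n : ℕ) (h : ¬ u 1 < u 0) :
    canon s u (n + 1) ↔ canon false (fun i => u (i + 1)) n := by
  unfold canon
  constructor
  · rintro ⟨h1, h2⟩
    refine ⟨?_, by simp⟩
    intro i hi
    rw [← mem_ds_succ] at hi ⊢
    exact h1 _ hi
  · rintro ⟨h1, h2⟩
    refine ⟨?_, fun _ => by rwa [mem_ds_zero]⟩
    intro i hi
    rw [mem_ds_succ]
    cases i with
    | zero => exact absurd ((mem_ds_zero u n).1 hi) h
    | succ i =>
      rw [mem_ds_succ] at hi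
      exact h1 _ hi

lemma cc_range (n : ℕ) : ∀ (u : ℕ → ℕ) (s : Bool),
    (¬ canon s u n → cc t s ((List.range (n + 1)).map u) = 0) ∧
    (canon s u n → ∃ k, k + 2 * (ds u n).card = n + (if s = true then 0 else 1) ∧
      cc t s ((List.range (n + 1)).map u) = t ^ (ds u n).card * (1 + t) ^ k) := by
  induction n with
  | zero =>
    intro u s
    constructor
    · intro h
      exact absurd (by simp [canon, ds]) h
    · intro _
      cases s
      · exact ⟨1, by simp [ds], by simp [ds, cc]⟩
      · exact ⟨0, by simp [ds], by simp [ds, cc]⟩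
  | succ n ih =>
    intro u s
    have ih' := ih (fun i => u (i + 1))
    rw [range_map_succ] at ih'
    rw [range_map_succ2]
    by_cases h : u 1 < u 0
    · rw [canon_desc _ _ _ h, ds_card_succ, if_pos h]
      cases s
      · constructor
        · intro hc
          rw [cc, if_pos h, (ih' true).1 (by tauto), mul_zero]
        · rintro ⟨_, hc⟩
          obtain ⟨k, hk, e⟩ := (ih' true).2 hc
          refine ⟨k, ?_, ?_⟩
          · simp at hk ⊢; omega
          · rw [cc, if_pos h, e]; ring
      · simp [cc, h]
    · rw [canon_asc _ _ _ h, ds_card_succ, if_neg h]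
      constructor
      · intro hc
        cases s
        · rw [cc, if_neg h, (ih' false).1 hc, mul_zero]
        · rw [cc, if_neg h, (ih' false).1 hc]
      · intro hc
        obtain ⟨k, hk, e⟩ := (ih' false).2 hc
        cases s
        · refine ⟨k + 1, ?_, ?_⟩
          · simp at hk ⊢; omega
          · rw [cc, if_neg h, e]; ring
        · refine ⟨k, ?_, ?_⟩
          · simp at hk ⊢; omega
          · rw [cc, if_neg h, e]; ring

end wts

/-- the word of orbit indices -/
def wl (n : ℕ) (K : Finset ℕ) (v : Equiv.Perm (Fin n)) : List ℕ :=
  List.ofFn fun i => orb K (v i)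

/-- the orbit index function -/
def uu (n : ℕ) (K : Finset ℕ) (v : Equiv.Perm (Fin n)) (i : ℕ) : ℕ := orb K (ol n v i)

lemma ol_val (n : ℕ) (v : Equiv.Perm (Fin n)) (j : Fin n) : ol n v j = v j := by
  simp [ol]

lemma ol_mk (n : ℕ) (v : Equiv.Perm (Fin n)) (i : ℕ) (h : i < n) : ol n v i = v ⟨i, h⟩ := by
  simp [ol, h]

lemma wl_eq (n : ℕ) (K : Finset ℕ) (v : Equiv.Perm (Fin n)) :
    wl n K v = (List.range n).map (uu n K v) := by
  apply List.ext_getElem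
  · simp [wl]
  · intro i h1 h2
    simp [wl] at h1
    simp [wl, uu, ol, h1]

lemma wl_eq_iff (n : ℕ) (K : Finset ℕ) (v w : Equiv.Perm (Fin n)) :
    wl n K v = wl n K w ↔ ∀ j : Fin n, orb K (v j) = orb K (w j) := by
  unfold wl
  rw [List.ofFn_inj]
  exact funext_iff

lemma wl_ctn (n : ℕ) (K : Finset ℕ) (v : Equiv.Perm (Fin n)) :
    wl n K v ∈ LS (ctn (wl n K 1)) := by
  rw [mem_LS]
  unfold ctn
  congr 1
  exact Multiset.coe_eq_coe.2 (Equiv.Perm.ofFn_comp_perm v (fun i : Fin n => orb K i))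

lemma exists_of_mem_LS (n : ℕ) (K : Finset ℕ) (l : List ℕ) (h : l ∈ LS (ctn (wl n K 1))) :
    ∃ σ, l = wl n K σ := by
  rw [mem_LS] at h
  have hp : l.Perm (wl n K 1) := Multiset.coe_eq_coe.1 (Multiset.toFinsupp.injective h)
  have hlen : l.length = n := by rw [hp.length_eq]; simp [wl]
  subst hlen
  set n := l.length
  let g : Fin n → ℕ := l.get
  have hg : List.ofFn g = l := List.ofFn_get l
  let s := Tuple.sort g
  have h1 : Monotone (g ∘ s) := Tuple.monotone_sort g
  have h2 : Monotone (fun i : Fin n => orb K i) := fun a b hab => orb_mono K hab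
  have h3 : (List.ofFn (g ∘ s)).Perm (List.ofFn (fun i : Fin n => orb K i)) := by
    refine (Equiv.Perm.ofFn_comp_perm s g).trans ?_
    rw [hg]
    exact hp
  have h4 : g ∘ s = fun i : Fin n => orb K i :=
    List.ofFn_injective (h3.eq_of_pairwise' h1.sortedLE_ofFn.pairwise h2.sortedLE_ofFn.pairwise)
  refine ⟨s⁻¹, ?_⟩
  rw [← hg]
  unfold wl
  rw [List.ofFn_inj]
  funext j
  have := congrFun h4 (s⁻¹ j)
  simpa using this

lemma Wset_pos {n : ℕ} {K : Finset ℕ} {v : Equiv.Perm (Fin n)} (hv : v ∈ Wset n K)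
    (p q : Fin n) (hpq : (v q : ℕ) = v p + 1) (hk : (v q : ℕ) ∈ K) : (p : ℕ) ≤ q + 1 := by
  have := (Finset.mem_filter.1 hv).2 _ hk (v q).2
  have e1 : v⁻¹ (⟨(v q : ℕ) - 1, lt_of_le_of_lt (Nat.sub_le _ 1) (v q).2⟩ : Fin n) = p := by
    rw [Equiv.Perm.inv_eq_iff_eq]
    apply Fin.ext
    simp [hpq]
  have e2 : v⁻¹ (⟨(v q : ℕ), (v q).2⟩ : Fin n) = q := by simp
  rw [e1, e2] at this
  exact this

lemma WKreps_pos {n : ℕ} {K : Finset ℕ} {v : Equiv.Perm (Fin n)} (hv : v ∈ WKreps n K)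
    (p q : Fin n) (hpq : (v q : ℕ) = v p + 1) (hk : (v q : ℕ) ∈ K) : p < q := by
  have := (Finset.mem_filter.1 hv).2 _ hk (v q).2
  have e1 : v⁻¹ (⟨(v q : ℕ) - 1, lt_of_le_of_lt (Nat.sub_le _ 1) (v q).2⟩ : Fin n) = p := by
    rw [Equiv.Perm.inv_eq_iff_eq]
    apply Fin.ext
    simp [hpq]
  have e2 : v⁻¹ (⟨(v q : ℕ), (v q).2⟩ : Fin n) = q := by simp
  rw [e1, e2] at this
  exact this

lemma mem_Wset_of {n : ℕ} {K : Finset ℕ} (hK : ∀ k ∈ K, 1 ≤ k ∧ k ≤ n - 1)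
    {v : Equiv.Perm (Fin n)}
    (h : ∀ p q : Fin n, (v q : ℕ) = v p + 1 → (v q : ℕ) ∈ K → (p : ℕ) ≤ q + 1) :
    v ∈ Wset n K := by
  refine Finset.mem_filter.2 ⟨Finset.mem_univ _, ?_⟩
  intro k hk hkn
  have := hK k hk
  apply h
  · simp; omega
  · simpa using hk

lemma mem_WKreps_of {n : ℕ} {K : Finset ℕ} (hK : ∀ k ∈ K, 1 ≤ k ∧ k ≤ n - 1)
    {v : Equiv.Perm (Fin n)}
    (h : ∀ p q : Fin n, (v q : ℕ) = v p + 1 → (v q : ℕ) ∈ K → p < q) :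
    v ∈ WKreps n K := by
  refine Finset.mem_filter.2 ⟨Finset.mem_univ _, ?_⟩
  intro k hk hkn
  have := hK k hk
  apply h
  · simp; omega
  · simpa using hk

/-- Main structural lemma on `W(K)`. -/
lemma Wset_block {n : ℕ} {K : Finset ℕ} {v : Equiv.Perm (Fin n)} (hv : v ∈ Wset n K)
    (p : Fin n) (b : ℕ) (hab : (v p : ℕ) ≤ b) : ∀ q : Fin n, (v q : ℕ) = b →
    orb K (v p) = orb K b → ∀ i, (q : ℕ) ≤ i → i < p →
    ol n v (i + 1) < ol n v i ∧ uu n K v (i + 1) = uu n K v i := by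
  induction b, hab using Nat.le_induction with
  | base =>
    intro q hq _ i h1 h2
    have : q = p := v.injective (Fin.ext hq)
    subst this
    omega
  | succ b hb ih =>
    intro q hq ho i h1 h2
    have hbn : b < n := by have := (v q).2; omega
    have o1 : orb K (v p) = orb K b :=
      le_antisymm (orb_mono K hb) (ho ▸ orb_mono K (Nat.le_succ b))
    have hbK : b + 1 ∈ K := (orb_succ_eq K b).1 (by rw [← ho, o1])
    let r : Fin n := v⁻¹ ⟨b, hbn⟩
    have hr : (v r : ℕ) = b := by simp [r]
    by_cases hri : (r : ℕ) ≤ i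
    · exact ih r hr o1 i hri h2
    · have := Wset_pos hv r q (by rw [hq, hr]) (by rw [hq]; exact hbK)
      have e1 : i = q := by omega
      have e2 : i + 1 = r := by omega
      unfold uu
      rw [e2, e1, ol_val, ol_val, hr, hq]
      exact ⟨by omega, by rw [← ho, o1]⟩

lemma desc_chain (f : ℕ → ℕ) (a b : ℕ) (hab : a < b)
    (h : ∀ i, a ≤ i → i < b → f (i + 1) < f i) : f b < f a := by
  induction b, hab using Nat.le_induction with
  | base => exact h a le_rfl (Nat.lt_succ_self a)
  | succ b hb ih =>
    have := ih (fun i h1 h2 => h i h1 (by omega))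
    have := h b (by omega) (by omega)
    omega

lemma perm_eq_of_order {n : ℕ} (v w : Equiv.Perm (Fin n))
    (h : ∀ j j', v j < v j' → w j < w j') : v = w := by
  have h1 : StrictMono (fun x => w (v⁻¹ x)) := by
    intro x y hxy
    apply h
    simpa using hxy
  have h2 : (fun x => w (v⁻¹ x)) = id := by
    refine (StrictMono.range_inj h1 strictMono_id).1 ?_
    rw [Set.range_id]
    exact Set.range_eq_univ.2 (w.surjective.comp (v⁻¹).surjective)
  ext j
  have := congrFun h2 (v j)
  simp at this
  rw [this]

/-- descents at plateaus -/
def dp (n : ℕ) (K : Finset ℕ) (v : Equiv.Perm (Fin n)) : Finset ℕ :=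
  (DesSet n v).filter fun i => uu n K v (i + 1) = uu n K v i

lemma mem_dp {n : ℕ} {K : Finset ℕ} {v : Equiv.Perm (Fin n)} {i : ℕ} :
    i ∈ dp n K v ↔ i < n - 1 ∧ ol n v (i + 1) < ol n v i ∧ uu n K v (i + 1) = uu n K v i := by
  simp [dp, DesSet, and_assoc]

lemma uniq {n : ℕ} {K : Finset ℕ} {v w : Equiv.Perm (Fin n)} (hv : v ∈ Wset n K)
    (hw : w ∈ Wset n K) (ho : ∀ j : Fin n, orb K (v j) = orb K (w j))
    (hd : dp n K v = dp n K w) : v = w := by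
  apply perm_eq_of_order
  intro j j' hlt
  by_contra hcon
  have hne : j ≠ j' := by rintro rfl; exact lt_irrefl _ hlt
  have hlt' : w j' < w j :=
    lt_of_le_of_ne (not_lt.1 hcon) (fun e => hne (w.injective e).symm)
  have a1 : orb K (v j) ≤ orb K (v j') := orb_mono K hlt.le
  have a2 : orb K (w j') ≤ orb K (w j) := orb_mono K hlt'.le
  have a3 := ho j
  have a4 := ho j'
  rcases lt_or_gt_of_ne hne with h | h
  · have hb := Wset_block hw j' (w j) hlt'.le j rfl (by omega)
    have := desc_chain (ol n v) j j' h (fun i h1 h2 => by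
      have : i ∈ dp n K v := by
        rw [hd, mem_dp]
        exact ⟨by have := j'.2; omega, hb i h1 h2⟩
      exact (mem_dp.1 this).2.1)
    rw [ol_val, ol_val] at this
    have : v j' < v j := this
    exact absurd hlt (not_lt.2 this.le)
  · have hb := Wset_block hv j (v j') hlt.le j' rfl (by omega)
    have := desc_chain (ol n w) j' j h (fun i h1 h2 => by
      have : i ∈ dp n K w := by
        rw [← hd, mem_dp]
        exact ⟨by have := j.2; omega, hb i h1 h2⟩
      exact (mem_dp.1 this).2.1)
    rw [ol_val, ol_val] at this
    have : w j < w j' := this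
    exact hcon this

/-- block number -/
def bn (D : Finset ℕ) (i : ℕ) : ℕ := ((Finset.range i).filter fun k => k ∉ D).card

lemma bn_succ (D : Finset ℕ) (i : ℕ) : bn D (i + 1) = bn D i + if i ∈ D then 0 else 1 := by
  unfold bn
  rw [Finset.range_add_one, Finset.filter_insert]
  by_cases h : i ∈ D <;> simp [h]

lemma bn_mono (D : Finset ℕ) : Monotone (bn D) :=
  monotone_nat_of_le_succ fun i => by rw [bn_succ]; omega

lemma exists_perm_order {n : ℕ} (f g : Fin n → ℕ) : ∃ v : Equiv.Perm (Fin n), ∀ j j',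
    v j < v j' ↔ f j < f j' ∨ f j = f j' ∧ (g j < g j' ∨ g j = g j' ∧ j' < j) := by
  let key : Fin n → ℕ ×ₗ (ℕ ×ₗ (Fin n)ᵒᵈ) := fun j => toLex (f j, toLex (g j, OrderDual.toDual j))
  have hinj : Function.Injective key := by
    intro a b h
    have := congrArg (fun x => OrderDual.ofDual (ofLex (ofLex x).2).2) h
    simpa [key] using this
  have hm : StrictMono (key ∘ Tuple.sort key) :=
    (Tuple.monotone_sort key).strictMono_of_injective (hinj.comp (Tuple.sort key).injective)
  refine ⟨(Tuple.sort key)⁻¹, fun j j' => ?_⟩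
  rw [← hm.lt_iff_lt]
  simp [key, Prod.Lex.lt_iff]

lemma exist {n : ℕ} {K : Finset ℕ} (hK : ∀ k ∈ K, 1 ≤ k ∧ k ≤ n - 1) (σ : Equiv.Perm (Fin n))
    (D : Finset ℕ) (hD : D ⊆ ps (uu n K σ) (n - 1)) :
    ∃ v ∈ Wset n K, (∀ j : Fin n, orb K (v j) = orb K (σ j)) ∧ dp n K v = D := by
  obtain ⟨v, hv⟩ := exists_perm_order (fun j : Fin n => orb K (σ j)) (fun j : Fin n => bn D j)
  have ho : ∀ j : Fin n, orb K (v j) = orb K (σ j) := by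
    intro j
    have h1 : Monotone ((fun j : Fin n => orb K (σ j)) ∘ (v⁻¹ : Equiv.Perm (Fin n))) := by
      intro x y hxy
      rcases eq_or_lt_of_le hxy with rfl | hlt
      · exact le_rfl
      · have := (hv (v⁻¹ x) (v⁻¹ y)).1 (by simpa using hlt)
        simp only [Function.comp]
        omega
    have h2 : Monotone ((fun j : Fin n => orb K (σ j)) ∘ (σ⁻¹ : Equiv.Perm (Fin n))) := by
      intro x y hxy
      simpa using orb_mono K hxy
    have := congrFun (Tuple.unique_monotone h1 h2) (v j)
    simpa using this.symm
  refine ⟨v, ?_, ho, ?_⟩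
  · apply mem_Wset_of hK
    intro p q hpq hk
    by_contra hcon
    push Not at hcon
    have hlt : v p < v q := by rw [Fin.lt_def]; omega
    have hoe : orb K (σ p) = orb K (σ q) := by
      rw [← ho, ← ho, hpq]
      exact ((orb_succ_eq K _).2 (by rw [← hpq]; exact hk)).symm
    have h1 := (hv p q).1 hlt
    have m1 := bn_mono D (show (q : ℕ) ≤ q + 1 by omega)
    have m2 := bn_mono D hcon.le
    have b1 : bn D p = bn D q := by omega
    have b2 : bn D (q + 1) = bn D q := by omega
    have hqD : (q : ℕ) ∈ D := by
      by_contra hc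
      rw [bn_succ, if_neg hc] at b2
      omega
    have hpl := hD hqD
    let r : Fin n := ⟨q + 1, by have := p.2; omega⟩
    have hr : orb K (σ r) = orb K (σ q) := by
      have := (Finset.mem_filter.1 hpl).2
      unfold uu at this
      rwa [ol_val, show (q : ℕ) + 1 = (r : ℕ) from rfl, ol_val] at this
    have g1 : v p < v r := (hv p r).2 (Or.inr ⟨by omega,
      Or.inr ⟨by simp only [r]; omega, by rw [Fin.lt_def]; exact hcon⟩⟩)
    have g2 : v r < v q := (hv r q).2 (Or.inr ⟨by omega,
      Or.inr ⟨by simp only [r]; omega, by rw [Fin.lt_def]; simp [r]⟩⟩)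
    rw [Fin.lt_def] at g1 g2
    omega
  · ext i
    rw [mem_dp]
    have hkey : ∀ (hi : i + 1 < n), uu n K v (i + 1) = uu n K v i →
        (ol n v (i + 1) < ol n v i ↔ i ∈ D) := by
      intro hi hu
      unfold uu at hu
      rw [ol_mk n v _ hi, ol_mk n v i (by omega), ho, ho] at hu
      rw [ol_mk n v _ hi, ol_mk n v i (by omega), ← Fin.lt_def, hv]
      simp only [hu, bn_succ, Fin.lt_def]
      by_cases hiD : i ∈ D <;> simp [hiD]
    have huu : ∀ x, x < n → uu n K v x = uu n K σ x := by
      intro x hx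
      unfold uu
      rw [ol_mk n v _ hx, ol_mk n σ _ hx, ho]
    constructor
    · rintro ⟨h1, h2, h3⟩
      exact (hkey (by omega) h3).1 h2
    · intro hi
      have h0 := Finset.mem_filter.1 (hD hi)
      have h1 := Finset.mem_range.1 h0.1
      have h3 : uu n K v (i + 1) = uu n K v i := by
        rw [huu _ (by omega), huu _ (by omega)]
        exact h0.2
      exact ⟨h1, (hkey (by omega) h3).2 hi, h3⟩

lemma mem_WKreps_iff {n : ℕ} {K : Finset ℕ} (hK : ∀ k ∈ K, 1 ≤ k ∧ k ≤ n - 1)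
    (w : Equiv.Perm (Fin n)) : w ∈ WKreps n K ↔ w ∈ Wset n K ∧ dp n K w = ∅ := by
  constructor
  · intro hw
    have hW : w ∈ Wset n K := mem_Wset_of hK fun p q h1 h2 => by
      have := WKreps_pos hw p q h1 h2
      rw [Fin.lt_def] at this
      omega
    refine ⟨hW, ?_⟩
    rw [Finset.eq_empty_iff_forall_notMem]
    intro i hi
    obtain ⟨h1, h2, h3⟩ := mem_dp.1 hi
    unfold uu at h3
    rw [ol_mk n w _ (show i + 1 < n by omega), ol_mk n w i (by omega)] at h2 h3
    have key : ∀ (p : Fin n) (b : ℕ), (w p : ℕ) + 1 ≤ b → ∀ q : Fin n, (w q : ℕ) = b →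
        orb K (w p) = orb K b → p < q := by
      intro p b hb
      induction b, hb using Nat.le_induction with
      | base =>
        intro q hq ho
        exact WKreps_pos hw p q hq (by rw [hq]; exact (orb_succ_eq K _).1 ho.symm)
      | succ b hb ih =>
        intro q hq ho
        have hbn : b < n := by have := (w q).2; omega
        have o1 : orb K (w p) = orb K b :=
          le_antisymm (orb_mono K (by omega)) (ho ▸ orb_mono K (Nat.le_succ b))
        have hr : (w (w⁻¹ ⟨b, hbn⟩) : ℕ) = b := by simp
        refine lt_trans (ih (w⁻¹ ⟨b, hbn⟩) hr o1) ?_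
        refine WKreps_pos hw _ q (by rw [hr, hq]) ?_
        rw [hq]
        exact (orb_succ_eq K _).1 (by rw [← ho, o1])
    have := key ⟨i + 1, by omega⟩ _ h2 ⟨i, by omega⟩ rfl h3
    rw [Fin.lt_def] at this
    simp at this
  · rintro ⟨hW, hd⟩
    apply mem_WKreps_of hK
    intro p q hpq hk
    by_contra hcon
    have h1 := Wset_pos hW p q hpq hk
    have hne : p ≠ q := by rintro rfl; omega
    have hne' : (p : ℕ) ≠ q := fun e => hne (Fin.ext e)
    rw [Fin.lt_def] at hcon
    have e : (q : ℕ) + 1 = p := by omega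
    have : (q : ℕ) ∈ dp n K w := by
      rw [mem_dp]
      unfold uu
      rw [e, ol_val, ol_val, hpq]
      refine ⟨by have := p.2; omega, by omega, ?_⟩
      exact ((orb_succ_eq K _).2 (by rw [← hpq]; exact hk)).symm
    rw [hd] at this
    simp at this

lemma uu_congr {n : ℕ} {K : Finset ℕ} {v w : Equiv.Perm (Fin n)}
    (ho : ∀ j : Fin n, orb K (v j) = orb K (w j)) : uu n K v = uu n K w := by
  funext x
  unfold uu
  by_cases hx : x < n
  · rw [ol_mk n v _ hx, ol_mk n w _ hx, ho]
  · simp [ol, hx]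

lemma DesSet_eq (n : ℕ) (K : Finset ℕ) (v : Equiv.Perm (Fin n)) :
    DesSet n v = ds (uu n K v) (n - 1) ∪ dp n K v := by
  ext i
  rw [Finset.mem_union, mem_dp]
  have e1 : i ∈ DesSet n v ↔ i < n - 1 ∧ ol n v (i + 1) < ol n v i := by simp [DesSet]
  have e2 : i ∈ ds (uu n K v) (n - 1) ↔
      i < n - 1 ∧ orb K (ol n v (i + 1)) < orb K (ol n v i) := by
    unfold ds
    rw [Finset.mem_filter, Finset.mem_range]
    rfl
  rw [e1, e2]
  simp only [uu]
  constructor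
  · rintro ⟨h1, h2⟩
    have := orb_mono K h2.le
    rcases eq_or_lt_of_le this with h | h
    · exact Or.inr ⟨h1, h2, h⟩
    · exact Or.inl ⟨h1, h⟩
  · rintro (⟨h1, h2⟩ | ⟨h1, h2, _⟩)
    · refine ⟨h1, ?_⟩
      by_contra hc
      have := orb_mono K (not_lt.1 hc)
      omega
    · exact ⟨h1, h2⟩

lemma des_eq (n : ℕ) (K : Finset ℕ) (v : Equiv.Perm (Fin n)) :
    des n v = (ds (uu n K v) (n - 1)).card + (dp n K v).card := by
  unfold des
  rw [DesSet_eq n K, Finset.card_union_of_disjoint]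
  rw [Finset.disjoint_left]
  intro i h1 h2
  have := (Finset.mem_filter.1 h1).2
  have := (mem_dp.1 h2).2.2
  omega

section final
variable {R : Type*} [CommRing R] (t : R)

lemma fiber_left {n : ℕ} {K : Finset ℕ} (hn : 1 ≤ n) (hK : ∀ k ∈ K, 1 ≤ k ∧ k ≤ n - 1)
    (σ : Equiv.Perm (Fin n)) :
    ∑ v ∈ (Wset n K).filter (fun v => wl n K v = wl n K σ), t ^ des n v = wA t (wl n K σ) := by
  have e : wA t (wl n K σ) = t ^ (ds (uu n K σ) (n - 1)).card *
      (1 + t) ^ (ps (uu n K σ) (n - 1)).card := by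
    rw [wl_eq, ← wA_range t (n - 1), Nat.sub_add_cancel hn]
  rw [e, ← Finset.prod_const (s := ps (uu n K σ) (n - 1)), Finset.prod_one_add, Finset.mul_sum]
  refine Finset.sum_bij (fun v _ => dp n K v) ?_ ?_ ?_ ?_
  · intro v hv
    rw [Finset.mem_filter, wl_eq_iff] at hv
    rw [Finset.mem_powerset]
    intro i hi
    have := mem_dp.1 hi
    rw [uu_congr hv.2] at this
    exact Finset.mem_filter.2 ⟨Finset.mem_range.2 this.1, this.2.2⟩
  · intro v hv w hw h
    rw [Finset.mem_filter, wl_eq_iff] at hv hw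
    exact uniq hv.1 hw.1 (fun j => by rw [hv.2, hw.2]) h
  · intro D hD
    obtain ⟨v, h1, h2, h3⟩ := exist hK σ D (Finset.mem_powerset.1 hD)
    exact ⟨v, Finset.mem_filter.2 ⟨h1, (wl_eq_iff n K v σ).2 h2⟩, h3⟩
  · intro v hv
    rw [Finset.mem_filter, wl_eq_iff] at hv
    rw [des_eq n K, uu_congr hv.2, pow_add, Finset.prod_const]

lemma fiber_right {n : ℕ} {K : Finset ℕ} (hn : 1 ≤ n) (hK : ∀ k ∈ K, 1 ≤ k ∧ k ≤ n - 1)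
    (σ : Equiv.Perm (Fin n)) :
    ∑ v ∈ ((WKreps n K).filter (fun w => NoDoubleDescent n w ∧ NoInitialDescent n w)).filter
        (fun v => wl n K v = wl n K σ),
      t ^ des n v * (1 + t) ^ (n - 1 - 2 * des n v) = cc t true (wl n K σ) := by
  obtain ⟨w, h1, h2, h3⟩ := exist hK σ ∅ (Finset.empty_subset _)
  have hwl := (wl_eq_iff n K w σ).2 h2
  have hD : DesSet n w = ds (uu n K w) (n - 1) := by rw [DesSet_eq n K, h3, Finset.union_empty]
  have hcan : (NoDoubleDescent n w ∧ NoInitialDescent n w) ↔ canon true (uu n K w) (n - 1) := by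
    unfold NoDoubleDescent NoInitialDescent canon
    rw [hD]
    simp
  have hrep : w ∈ WKreps n K := (mem_WKreps_iff hK w).2 ⟨h1, h3⟩
  have huniq : ∀ v ∈ WKreps n K, wl n K v = wl n K σ → v = w := by
    intro v hv hv'
    rw [mem_WKreps_iff hK] at hv
    exact uniq hv.1 h1 ((wl_eq_iff n K v w).1 (by rw [hv', hwl])) (by rw [hv.2, h3])
  have hcc := cc_range t (n - 1) (uu n K w) true
  rw [Nat.sub_add_cancel hn, ← wl_eq, hwl, ← hcan] at hcc
  by_cases hc : NoDoubleDescent n w ∧ NoInitialDescent n w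
  · obtain ⟨k, hk, e⟩ := hcc.2 hc
    rw [Finset.sum_eq_single w]
    · rw [e, des, hD]
      congr 2
      simp at hk
      omega
    · intro v hv hne
      simp only [Finset.mem_filter] at hv
      exact absurd (huniq v hv.1.1 hv.2) hne
    · intro h
      exact absurd (Finset.mem_filter.2 ⟨Finset.mem_filter.2 ⟨hrep, hc⟩, hwl⟩) h
  · rw [hcc.1 hc]
    apply Finset.sum_eq_zero
    intro v hv
    simp only [Finset.mem_filter] at hv
    have := huniq v hv.1.1 hv.2
    subst this
    exact absurd hv.1.2 hc

theorem main_ring {n : ℕ} {K : Finset ℕ} (hn : 1 ≤ n) (hK : ∀ k ∈ K, 1 ≤ k ∧ k ≤ n - 1) :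
    ∑ v ∈ Wset n K, t ^ des n v =
      ∑ w ∈ (WKreps n K).filter (fun w => NoDoubleDescent n w ∧ NoInitialDescent n w),
        t ^ des n w * (1 + t) ^ (n - 1 - 2 * des n w) := by
  rw [← Finset.sum_fiberwise_of_maps_to (t := LS (ctn (wl n K 1))) (g := wl n K)
      (fun v _ => wl_ctn n K v),
    ← Finset.sum_fiberwise_of_maps_to (t := LS (ctn (wl n K 1))) (g := wl n K)
      (fun v _ => wl_ctn n K v)]
  have hμ : ctn (wl n K 1) ≠ 0 := by
    intro h
    have h' : ((wl n K 1 : List ℕ) : Multiset ℕ) = 0 :=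
      Multiset.toFinsupp.injective (by rw [Multiset.toFinsupp_zero]; exact h)
    have := congrArg Multiset.card h'
    simp [wl] at this
    omega
  have key := sum_wA_eq t _ hμ
  refine Eq.trans ?_ (key.trans ?_)
  · refine Finset.sum_congr rfl fun l hl => ?_
    obtain ⟨σ, rfl⟩ := exists_of_mem_LS n K l hl
    exact fiber_left t hn hK σ
  · refine Finset.sum_congr rfl fun l hl => ?_
    obtain ⟨σ, rfl⟩ := exists_of_mem_LS n K l hl
    exact (fiber_right t hn hK σ).symm

end final

theorem main_theorem_tilde (n : ℕ) (K : Finset ℕ)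
    (hK : ∀ k ∈ K, 1 ≤ k ∧ k ≤ n - 1) :
    ∑ v ∈ Wset n K, (X : Polynomial ℕ) ^ des n v =
      ∑ w ∈ (WKreps n K).filter
          (fun w => NoDoubleDescent n w ∧ NoInitialDescent n w),
        (X : Polynomial ℕ) ^ des n w * (1 + X) ^ (n - 1 - 2 * des n w) := by
  rcases Nat.eq_zero_or_pos n with rfl | hn
  · have hK0 : K = ∅ := by
      rw [Finset.eq_empty_iff_forall_notMem]
      intro k hk
      have := hK k hk
      omega
    subst hK0
    simp [Wset, WKreps, des, DesSet, NoDoubleDescent, NoInitialDescent]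
  · apply Polynomial.map_injective (Nat.castRingHom ℤ) Nat.cast_injective
    rw [Polynomial.map_sum, Polynomial.map_sum]
    simpa using main_ring (X : Polynomial ℤ) hn hK
end
end

section
/- For every K ⊆ [n-1], Σ_{v ∈ W(K)} t^{des(v)} = Σ_{w ∈ Ŵ^K} t^{des(w)} (1+t)^{n-1-2·des(w)}, where Ŵ^K is the set of minimal-length coset representatives of W_K in S_n having no double descent and no final descent. -/
open Finset Polynomial

open scoped Classical

noncomputable section

theorem xx_F {B : Type*} [CommRing B] (t : B) (N : ℕ) (y Φ : ℕ → B)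
    (h : ∀ a, Φ a = 1 + ∑ b ∈ range N,
      (if b < a then t else if a = b then 1 + t else 1) * y b * Φ b) :
    (1 + ∑ a ∈ range N, y a * Φ a) * ∏ a ∈ range N, (1 - y a) =
    (1 + t * ∑ a ∈ range N, y a * Φ a) * ∏ a ∈ range N, (1 - t * y a) := by
  set E : ℕ → B := fun a => 1 + ∑ b ∈ range N, (if b < a then t else 1) * y b * Φ b with hE
  have h1 : ∀ a < N, E a = (1 - t * y a) * Φ a := by
    intro a ha
    have : Φ a - E a = t * y a * Φ a := by
      conv_lhs => rw [h a]
      simp only [hE]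
      rw [add_sub_add_left_eq_sub, ← Finset.sum_sub_distrib,
        Finset.sum_eq_single_of_mem a (by simpa using ha)]
      · simp; ring
      · intro b _ hb
        simp only [if_neg (Ne.symm hb)]; ring
    linear_combination -this
  have h2 : ∀ a < N, E (a+1) = (1 - y a) * Φ a := by
    intro a ha
    have : Φ a - E (a+1) = y a * Φ a := by
      conv_lhs => rw [h a]
      simp only [hE]
      rw [add_sub_add_left_eq_sub, ← Finset.sum_sub_distrib,
        Finset.sum_eq_single_of_mem a (by simpa using ha)]
      · simp; ring
      · intro b _ hb
        rcases lt_or_gt_of_ne hb with h3 | h3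
        · rw [if_pos h3, if_pos (by omega)]; ring
        · rw [if_neg (by omega), if_neg (by omega), if_neg (by omega)]; ring
    linear_combination -this
  have h3 : ∀ a ≤ N, E 0 * ∏ c ∈ range a, (1 - y c) = E a * ∏ c ∈ range a, (1 - t * y c) := by
    intro a
    induction a with
    | zero => intro; simp
    | succ a ih =>
      intro ha
      have := ih (by omega)
      rw [prod_range_succ, prod_range_succ, ← mul_assoc, this, h1 a (by omega), h2 a (by omega)]
      ring
  have h4 := h3 N le_rfl
  have e0 : E 0 = 1 + ∑ a ∈ range N, y a * Φ a := by simp [hE]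
  have eN : E N = 1 + t * ∑ a ∈ range N, y a * Φ a := by
    simp only [hE, Finset.mul_sum]
    congr 1
    apply Finset.sum_congr rfl
    intro b hb
    rw [if_pos (by simpa using hb)]; ring
  rw [← e0, ← eN, h4]

theorem xx_G {B : Type*} [CommRing B] (t : B) (N : ℕ) (y Ψ Ψ' : ℕ → B)
    (h : ∀ a, Ψ a = 1 + ∑ b ∈ range N,
      if b < a then t * y b * Ψ' b else (1 + t) * y b * Ψ b)
    (h' : ∀ a, Ψ' a = ∑ b ∈ range N, if b < a then 0 else y b * Ψ b) :
    (1 + ∑ a ∈ range N, y a * Ψ a) * ∏ a ∈ range N, (1 - y a) =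
    (1 + t * ∑ a ∈ range N, y a * Ψ a) * ∏ a ∈ range N, (1 - t * y a) := by
  set S := ∑ a ∈ range N, y a * Ψ a with hS
  have d1 : ∀ a < N, Ψ a - Ψ (a+1) = (1 + t) * y a * Ψ a - t * y a * Ψ' a := by
    intro a ha
    conv_lhs => rw [h a, h (a+1)]
    rw [add_sub_add_left_eq_sub, ← Finset.sum_sub_distrib,
        Finset.sum_eq_single_of_mem a (by simpa using ha)]
    · simp
    · intro b _ hb
      by_cases h3 : b < a
      · rw [if_pos h3, if_pos (by omega)]; ring
      · rw [if_neg (by omega), if_neg (by omega)]; ring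
  have d2 : ∀ a < N, Ψ' a - Ψ' (a+1) = y a * Ψ a := by
    intro a ha
    conv_lhs => rw [h' a, h' (a+1)]
    rw [← Finset.sum_sub_distrib,
        Finset.sum_eq_single_of_mem a (by simpa using ha)]
    · simp
    · intro b _ hb
      by_cases h3 : b < a
      · rw [if_pos h3, if_pos (by omega)]; ring
      · rw [if_neg (by omega), if_neg (by omega)]; ring
  have e1 : Ψ' 0 = S := by rw [h' 0]; simp [hS]
  have e2 : Ψ 0 = 1 + (1 + t) * S := by
    rw [h 0, hS, Finset.mul_sum]; simp [mul_assoc]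
  have e3 : Ψ' N = 0 := by
    rw [h' N]; apply Finset.sum_eq_zero
    intro b hb
    rw [if_pos (by simpa using hb)]
  have k : ∀ a ≤ N, Ψ a - t * Ψ' a = (1 + S) * ∏ c ∈ range a, (1 - y c) ∧
      Ψ a - Ψ' a = (1 + t * S) * ∏ c ∈ range a, (1 - t * y c) := by
    intro a
    induction a with
    | zero => intro; simp only [e1, e2, range_zero, prod_empty]; constructor <;> ring
    | succ a ih =>
      intro ha
      obtain ⟨i1, i2⟩ := ih (by omega)
      have D1 := d1 a (by omega)
      have D2 := d2 a (by omega)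
      rw [prod_range_succ, prod_range_succ, ← mul_assoc, ← mul_assoc, ← i1, ← i2]
      constructor
      · linear_combination -D1 + t * D2
      · linear_combination -D1 + D2
  obtain ⟨k1, k2⟩ := k N le_rfl
  rw [← k1, ← k2, e3]; ring

theorem xx_abs {A : Type*} [CommRing A] [IsDomain A] (t : A) (ht : 1 - t ≠ 0) (N : ℕ) (x : ℕ → A)
    (φ ψ ψ' : ℕ → ℕ → A)
    (f0 : ∀ a, φ 0 a = 1) (g0 : ∀ a, ψ 0 a = 1) (g0' : ∀ a, ψ' 0 a = 0)
    (f1 : ∀ m a, φ (m+1) a = ∑ b ∈ range N,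
      (if b < a then t else if a = b then 1 + t else 1) * x b * φ m b)
    (g1 : ∀ m a, ψ (m+1) a = ∑ b ∈ range N,
      if b < a then t * x b * ψ' m b else (1 + t) * x b * ψ m b)
    (g1' : ∀ m a, ψ' (m+1) a = ∑ b ∈ range N, if b < a then 0 else x b * ψ m b) (m : ℕ) :
    ∑ a ∈ range N, x a * φ m a = ∑ a ∈ range N, x a * ψ m a := by
  let T : PowerSeries A := PowerSeries.C t
  let y : ℕ → PowerSeries A := fun b => PowerSeries.X * PowerSeries.C (x b)
  let Φ : ℕ → PowerSeries A := fun a => PowerSeries.mk fun m => φ m a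
  let Ψ : ℕ → PowerSeries A := fun a => PowerSeries.mk fun m => ψ m a
  let Ψ' : ℕ → PowerSeries A := fun a => PowerSeries.mk fun m => ψ' m a
  have HF := xx_F T N y Φ (by
    intro a
    have : ∀ b, (if b < a then T else if a = b then 1 + T else 1) * y b * Φ b =
      PowerSeries.X * (PowerSeries.C ((if b < a then t else if a = b then 1 + t else 1) * x b) * Φ b) := by
      intro b
      simp only [y, T]
      split_ifs <;> simp only [map_mul, map_add, map_one] <;> ring
    simp only [this]
    ext m
    rw [← Finset.mul_sum]
    cases m with
    | zero => simp [Φ, f0]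
    | succ m => 
      simp only [map_add, PowerSeries.coeff_succ_X_mul, map_sum, PowerSeries.coeff_C_mul,
        PowerSeries.coeff_one]
      simp [Φ, f1])
  have HG := xx_G T N y Ψ Ψ' (by
    intro a
    have : ∀ b, (if b < a then T * y b * Ψ' b else (1 + T) * y b * Ψ b) =
      PowerSeries.X * (if b < a then PowerSeries.C (t * x b) * Ψ' b else PowerSeries.C ((1 + t) * x b) * Ψ b) := by
      intro b
      simp only [y, T]
      split_ifs <;> simp only [map_mul, map_add, map_one] <;> ring
    simp only [this]
    ext m
    rw [← Finset.mul_sum]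
    cases m with
    | zero => simp [Ψ, g0]
    | succ m => 
      simp only [map_add, PowerSeries.coeff_succ_X_mul, map_sum, apply_ite (PowerSeries.coeff m), PowerSeries.coeff_C_mul,
        PowerSeries.coeff_one]
      simp [Ψ, Ψ', g1]) (by
    intro a
    have : ∀ b, (if b < a then 0 else y b * Ψ b) =
      PowerSeries.X * (if b < a then 0 else PowerSeries.C (x b) * Ψ b) := by
      intro b
      simp only [y]
      split_ifs <;> ring
    simp only [this]
    ext m
    rw [← Finset.mul_sum]
    cases m with
    | zero => simp [Ψ', g0']
    | succ m => 
      simp only [map_add, PowerSeries.coeff_succ_X_mul, map_sum, apply_ite (PowerSeries.coeff m), PowerSeries.coeff_C_mul,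
        PowerSeries.coeff_one]
      simp [Ψ, Ψ', g1'])
  have key : ∑ a ∈ range N, y a * Φ a = ∑ a ∈ range N, y a * Ψ a := by
    set P := ∏ a ∈ range N, (1 - y a) with hP
    set Q := ∏ a ∈ range N, (1 - T * y a) with hQ
    have hne : P - T * Q ≠ 0 := by
      intro h0
      have := congrArg PowerSeries.constantCoeff h0
      simp [hP, hQ, map_prod, y, T] at this
      exact ht this
    apply mul_right_cancel₀ hne
    linear_combination HF - HG
  have := congrArg (PowerSeries.coeff (m+1)) key
  simpa [y, mul_assoc, PowerSeries.coeff_succ_X_mul, Φ, Ψ] using this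

def xxex {m N : ℕ} (v : Fin m → Fin N) (i : ℕ) : ℕ := if h : i < m then (v ⟨i, h⟩ : ℕ) else 0

def xxcs (a : ℕ) (s : ℕ → ℕ) : ℕ → ℕ
  | 0 => a
  | i + 1 => s i

theorem xxex_cons {m N : ℕ} (b : Fin N) (v : Fin m → Fin N) :
    xxex (Fin.cons b v : Fin (m+1) → Fin N) = xxcs b (xxex v) := by
  funext i
  cases i with
  | zero => simp [xxex, xxcs]
  | succ i =>
    simp only [xxex, xxcs, Nat.add_lt_add_iff_right]
    split_ifs with h
    · have : (⟨i+1, by omega⟩ : Fin (m+1)) = Fin.succ ⟨i, h⟩ := rfl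
      rw [this, Fin.cons_succ]
    · rfl

/-- weight of a word. -/
def xxFw {R : Type*} [CommRing R] (t : R) (m : ℕ) (s : ℕ → ℕ) : R :=
  ∏ i ∈ range m, (if s (i+1) < s i then t else if s i = s (i+1) then 1 + t else 1)

def xxhat (m : ℕ) (d : ℕ → Prop) : Prop := ∀ i < m, d i → i + 1 < m ∧ ¬ d (i+1)

def xxhw {R : Type*} [CommRing R] (t : R) (m : ℕ) (d : ℕ → Prop) : R :=
  if xxhat m d then t ^ (#((range m).filter d)) * (1 + t) ^ (m - 2 * #((range m).filter d)) else 0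

theorem xxcard_succ (m : ℕ) (d : ℕ → Prop) :
    #((range (m+1)).filter d) = #((range m).filter fun i => d (i+1)) + if d 0 then 1 else 0 := by
  rw [card_filter, card_filter, sum_range_succ']

theorem xxhat_succ_neg (m : ℕ) (d : ℕ → Prop) (h : ¬ d 0) :
    xxhat (m+1) d ↔ xxhat m (fun i => d (i+1)) := by
  constructor
  · intro H i hi hd
    have := H (i+1) (by omega) hd
    exact ⟨by omega, this.2⟩
  · intro H i hi hd
    cases i with
    | zero => exact absurd hd h
    | succ i =>
      have := H i (by omega) hd
      exact ⟨by omega, this.2⟩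

theorem xxhat_one_pos (d : ℕ → Prop) (h : d 0) : ¬ xxhat 1 d := by
  intro H
  have := H 0 (by omega) h
  omega

theorem xxhat_pos_not1 (m : ℕ) (d : ℕ → Prop) (h : d 0) (h1 : d 1) : ¬ xxhat (m+1) d := by
  intro H
  exact (H 0 (by omega) h).2 h1

theorem xxhat_succ_pos (m : ℕ) (d : ℕ → Prop) (h : d 0) (h1 : ¬ d 1) :
    xxhat (m+2) d ↔ xxhat m (fun i => d (i+2)) := by
  rw [← xxhat_succ_neg m (fun i => d (i+1)) h1]
  constructor
  · intro H i hi hd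
    have := H (i+1) (by omega) hd
    exact ⟨by omega, this.2⟩
  · intro H i hi hd
    cases i with
    | zero => exact ⟨by omega, h1⟩
    | succ i =>
      have := H i (by omega) hd
      exact ⟨by omega, this.2⟩

theorem xxhat_card (m : ℕ) : ∀ (d : ℕ → Prop), xxhat m d → 2 * #((range m).filter d) ≤ m := by
  induction m using Nat.strong_induction_on with
  | _ m ih =>
    intro d H
    match m with
    | 0 => simp
    | 1 =>
      by_cases h : d 0
      · exact absurd H (xxhat_one_pos d h)
      · rw [show (1:ℕ) = 0 + 1 from rfl, xxcard_succ]; simp [h]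
    | m + 2 =>
      by_cases h : d 0
      · by_cases h1 : d 1
        · exact absurd H (xxhat_pos_not1 _ d h h1)
        · have := ih m (by omega) _ ((xxhat_succ_pos m d h h1).1 H)
          rw [xxcard_succ, xxcard_succ]
          simp only [zero_add, h, h1, if_true, if_false]
          simp only [add_assoc, Nat.reduceAdd] at *
          omega
      · have := ih (m+1) (by omega) _ ((xxhat_succ_neg (m+1) d h).1 H)
        rw [xxcard_succ]
        simp only [h, if_false]
        omega

theorem xxhw_zero {R : Type*} [CommRing R] (t : R) (d : ℕ → Prop) : xxhw t 0 d = 1 := by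
  simp [xxhw, xxhat]

theorem xxhw_neg {R : Type*} [CommRing R] (t : R) (m : ℕ) (d : ℕ → Prop) (h : ¬ d 0) :
    xxhw t (m+1) d = (1 + t) * xxhw t m (fun i => d (i+1)) := by
  unfold xxhw
  rw [xxhat_succ_neg m d h]
  split_ifs with H
  · have := xxhat_card _ _ H
    rw [xxcard_succ]
    simp only [h, if_false, add_zero]
    rw [Nat.sub_add_comm this, pow_succ]; ring
  · simp

theorem xxhw_one {R : Type*} [CommRing R] (t : R) (d : ℕ → Prop) (h : d 0) :
    xxhw t 1 d = 0 := by
  unfold xxhw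
  rw [if_neg (xxhat_one_pos d h)]

theorem xxhw_pos1 {R : Type*} [CommRing R] (t : R) (m : ℕ) (d : ℕ → Prop) (h : d 0) (h1 : d 1) :
    xxhw t (m+1) d = 0 := by
  unfold xxhw
  rw [if_neg (xxhat_pos_not1 m d h h1)]

theorem xxhw_pos {R : Type*} [CommRing R] (t : R) (m : ℕ) (d : ℕ → Prop) (h : d 0) (h1 : ¬ d 1) :
    xxhw t (m+2) d = t * xxhw t m (fun i => d (i+2)) := by
  unfold xxhw
  rw [xxhat_succ_pos m d h h1]
  split_ifs with H
  · have := xxhat_card _ _ H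
    rw [xxcard_succ, xxcard_succ]
    simp only [zero_add, h, h1, if_true, if_false, add_zero, add_assoc, Nat.reduceAdd]
    rw [pow_succ, show m + 2 - 2 * (#((range m).filter fun i => d (i+2)) + 1) =
      m - 2 * #((range m).filter fun i => d (i+2)) by omega]
    ring
  · simp

theorem xxsum_cons {M : Type*} [AddCommMonoid M] {m N : ℕ} (f : (Fin (m+1) → Fin N) → M) :
    ∑ v, f v = ∑ b : Fin N, ∑ v : Fin m → Fin N, f (Fin.cons b v : Fin (m+1) → Fin N) := by
  rw [← Fintype.sum_prod_type' (f := fun b v => f (Fin.cons b v : Fin (m+1) → Fin N))]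
  exact (Fintype.sum_equiv (Fin.consEquiv fun _ : Fin (m+1) => Fin N) _ _ (fun _ => rfl)).symm

/-- descent predicate -/
def xxd (s : ℕ → ℕ) (i : ℕ) : Prop := s (i+1) < s i

def xxgen (N : ℕ) (W : ℕ → (ℕ → ℕ) → ℤ[X]) (m : ℕ) (a : ℕ) : MvPolynomial ℕ ℤ[X] :=
  ∑ v : Fin m → Fin N, MvPolynomial.C (W m (xxcs a (xxex v))) * ∏ i, MvPolynomial.X (v i : ℕ)

theorem xxgen_zero (N : ℕ) (W : ℕ → (ℕ → ℕ) → ℤ[X]) (a : ℕ) (h : ∀ s, W 0 s = 1) :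
    xxgen N W 0 a = 1 := by
  simp [xxgen, h]

theorem xxgen_succ (N : ℕ) (W : ℕ → (ℕ → ℕ) → ℤ[X]) (m a : ℕ) :
    xxgen N W (m+1) a = ∑ b ∈ range N, MvPolynomial.X b *
      ∑ v : Fin m → Fin N, MvPolynomial.C (W (m+1) (xxcs a (xxcs b (xxex v)))) *
        ∏ i, MvPolynomial.X (v i : ℕ) := by
  rw [xxgen, xxsum_cons, Finset.sum_range]
  apply Finset.sum_congr rfl
  intro b _
  rw [Finset.mul_sum]
  apply Finset.sum_congr rfl
  intro v _
  rw [xxex_cons, Fin.prod_univ_succ]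
  simp only [Fin.cons_zero, Fin.cons_succ]
  ring

def xxW1 (m : ℕ) (s : ℕ → ℕ) : ℤ[X] := xxFw X m s
def xxW2 (m : ℕ) (s : ℕ → ℕ) : ℤ[X] := xxhw X m (xxd s)

theorem xxgen_total (N : ℕ) (W : ℕ → (ℕ → ℕ) → ℤ[X]) (m : ℕ) :
    ∑ u : Fin (m+1) → Fin N, MvPolynomial.C (W m (xxex u)) * ∏ i, MvPolynomial.X (u i : ℕ)
    = ∑ a ∈ range N, MvPolynomial.X a * xxgen N W m a := by
  rw [xxsum_cons, Finset.sum_range]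
  apply Finset.sum_congr rfl
  intro b _
  rw [xxgen, Finset.mul_sum]
  apply Finset.sum_congr rfl
  intro v _
  rw [xxex_cons, Fin.prod_univ_succ]
  simp only [Fin.cons_zero, Fin.cons_succ]
  ring

theorem xxd_cs (a : ℕ) (s : ℕ → ℕ) : (fun i => xxd (xxcs a s) (i+1)) = xxd s := rfl

theorem xxgen_eq (N m : ℕ) :
    ∑ a ∈ range N, MvPolynomial.X a * xxgen N xxW1 m a =
    ∑ a ∈ range N, MvPolynomial.X a * xxgen N xxW2 m a := by
  apply xx_abs (A := MvPolynomial ℕ ℤ[X]) (MvPolynomial.C (X : ℤ[X])) ?_ N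
    (fun a => MvPolynomial.X a) (xxgen N xxW1) (xxgen N xxW2)
    (fun m a => match m with
      | 0 => 0
      | m + 1 => ∑ b ∈ range N, if b < a then 0 else MvPolynomial.X b * xxgen N xxW2 m b)
  · intro a; exact xxgen_zero _ _ _ (fun s => by simp [xxW1, xxFw])
  · intro a; exact xxgen_zero _ _ _ (fun s => xxhw_zero _ _)
  · intro a; rfl
  · intro m a
    rw [xxgen_succ]
    apply Finset.sum_congr rfl
    intro b _
    rw [xxgen, Finset.mul_sum, Finset.mul_sum]
    apply Finset.sum_congr rfl
    intro v _
    have : xxW1 (m+1) (xxcs a (xxcs b (xxex v))) =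
        (if b < a then X else if a = b then 1 + X else 1) * xxW1 m (xxcs b (xxex v)) := by
      simp only [xxW1, xxFw]
      rw [prod_range_succ', mul_comm]; rfl
    rw [this, map_mul]
    split_ifs <;> (try simp only [map_add, map_one]) <;> ring
  · intro m a
    rw [xxgen_succ]
    apply Finset.sum_congr rfl
    intro b _
    split_ifs with h
    · cases m with
      | zero =>
        simp only [mul_zero]
        have : ∀ v : Fin 0 → Fin N, xxW2 (0+1) (xxcs a (xxcs b (xxex v))) = 0 := by
          intro v
          exact xxhw_one _ _ h
        simp [this]
      | succ m =>
        change _ = MvPolynomial.C X * MvPolynomial.X b *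
          ∑ c ∈ range N, if c < b then 0 else MvPolynomial.X c * xxgen N xxW2 m c
        rw [xxsum_cons, Finset.sum_range, mul_comm (MvPolynomial.C X), mul_assoc, Finset.mul_sum (a := MvPolynomial.C X)]
        congr 1
        apply Finset.sum_congr rfl
        intro c _
        split_ifs with h2
        · rw [mul_zero]
          apply Finset.sum_eq_zero
          intro v _
          rw [xxex_cons]
          have : xxW2 (m+1+1) (xxcs a (xxcs b (xxcs c (xxex v)))) = 0 := 
            xxhw_pos1 _ _ _ h h2
          rw [this]; simp
        · rw [xxgen, Finset.mul_sum, Finset.mul_sum]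
          apply Finset.sum_congr rfl
          intro v _
          rw [xxex_cons]
          have : xxW2 (m+1+1) (xxcs a (xxcs b (xxcs c (xxex v)))) = X * xxW2 m (xxcs c (xxex v)) := 
            xxhw_pos _ _ _ h h2
          rw [this, Fin.prod_univ_succ, map_mul]
          simp only [Fin.cons_zero, Fin.cons_succ]
          ring
    · rw [xxgen, Finset.mul_sum, Finset.mul_sum]
      apply Finset.sum_congr rfl
      intro v _
      have : xxW2 (m+1) (xxcs a (xxcs b (xxex v))) = (1 + X) * xxW2 m (xxcs b (xxex v)) := 
        xxhw_neg _ _ _ h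
      rw [this, map_mul]
      simp only [map_add, map_one]; ring
  · intro m a; rfl
  · intro h
    have h1 : MvPolynomial.C (σ := ℕ) (X : ℤ[X]) = MvPolynomial.C 1 := by
      rw [map_one]; exact (sub_eq_zero.1 h).symm
    have h2 := congrArg natDegree (MvPolynomial.C_injective _ _ h1)
    simp at h2

/-- content of a word -/
def xxcont {m N : ℕ} (u : Fin m → Fin N) : ℕ →₀ ℕ := ∑ i, Finsupp.single (u i : ℕ) 1

theorem xxcontent_eq (m N : ℕ) (μ : ℕ →₀ ℕ) :
    ∑ u : Fin (m+1) → Fin N with xxcont u = μ, xxFw (X : ℤ[X]) m (xxex u) =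
    ∑ u : Fin (m+1) → Fin N with xxcont u = μ, xxhw (X : ℤ[X]) m (xxd (xxex u)) := by
  have h := xxgen_eq N m
  rw [← xxgen_total, ← xxgen_total] at h
  have hm : ∀ u : Fin (m+1) → Fin N, ∏ i, (MvPolynomial.X (u i : ℕ) : MvPolynomial ℕ ℤ[X]) =
      MvPolynomial.monomial (xxcont u) 1 := by
    intro u
    rw [xxcont, MvPolynomial.monomial_sum_one]; rfl
  simp only [hm] at h
  have := congrArg (MvPolynomial.coeff μ) h
  simp only [MvPolynomial.coeff_sum, MvPolynomial.coeff_C_mul, MvPolynomial.coeff_monomial, mul_ite, mul_one, mul_zero] at this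
  rw [Finset.sum_filter, Finset.sum_filter]
  exact this

def xxb (K : Finset ℕ) (a : ℕ) : ℕ := #((Icc 1 a).filter (· ∉ K))

theorem xxb_succ (K : Finset ℕ) (a : ℕ) : xxb K (a+1) = xxb K a + if a + 1 ∈ K then 0 else 1 := by
  unfold xxb
  rw [card_filter, card_filter, Finset.sum_Icc_succ_top (by omega)]
  simp

theorem xxb_mono (K : Finset ℕ) : Monotone (xxb K) :=
  monotone_nat_of_le_succ fun a => by rw [xxb_succ]; omega

theorem xxb_le (K : Finset ℕ) (a : ℕ) : xxb K a ≤ a := by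
  unfold xxb
  exact (card_filter_le _ _).trans (by simp)

theorem xxb_same (K : Finset ℕ) {c d : ℕ} (h : xxb K c = xxb K d) (k : ℕ) (h1 : c < k) (h2 : k ≤ d) :
    k ∈ K := by
  obtain ⟨k, rfl⟩ : ∃ j, k = j + 1 := ⟨k - 1, by omega⟩
  by_contra hk
  have e := xxb_succ K k
  rw [if_neg hk] at e
  have := xxb_mono K (show c ≤ k by omega)
  have := xxb_mono K h2
  omega

theorem xxb_pred (K : Finset ℕ) {k : ℕ} (hk : k ∈ K) (h1 : 1 ≤ k) : xxb K (k-1) = xxb K k := by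
  obtain ⟨k, rfl⟩ : ∃ j, k = j + 1 := ⟨k - 1, by omega⟩
  rw [xxb_succ, if_pos hk]; rfl

def xxu (K : Finset ℕ) {n : ℕ} (v : Equiv.Perm (Fin n)) : Fin n → Fin n :=
  fun i => ⟨xxb K (v i), (xxb_le K _).trans_lt (v i).2⟩

def xxplat {n : ℕ} (u : Fin n → Fin n) : Finset ℕ :=
  (range (n-1)).filter fun i => xxex u i = xxex u (i+1)

def xxS (K : Finset ℕ) {n : ℕ} (v : Equiv.Perm (Fin n)) : Finset ℕ :=
  (xxplat (xxu K v)).filter fun i => ol n v (i+1) < ol n v i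

theorem xxex_u (K : Finset ℕ) {n : ℕ} (v : Equiv.Perm (Fin n)) (i : ℕ) :
    xxex (xxu K v) i = xxb K (ol n v i) := by
  unfold xxex ol xxu
  split_ifs
  · rfl
  · simp [xxb]

theorem xxdes (K : Finset ℕ) {n : ℕ} (v : Equiv.Perm (Fin n)) :
    des n v = #((range (n-1)).filter (xxd (xxex (xxu K v)))) + #(xxS K v) := by
  unfold des
  rw [← Finset.card_union_of_disjoint]
  · congr 1
    ext i
    simp only [DesSet, xxS, xxplat, mem_filter, mem_union, xxd, xxex_u]
    constructor
    · rintro ⟨h1, h2⟩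
      have := xxb_mono K h2.le
      rcases this.lt_or_eq with h | h
      · left; exact ⟨h1, h⟩
      · right; exact ⟨⟨h1, h.symm⟩, h2⟩
    · rintro (⟨h1, h2⟩ | ⟨⟨h1, _⟩, h2⟩)
      · refine ⟨h1, ?_⟩
        by_contra h
        have := xxb_mono K (not_lt.1 h)
        omega
      · exact ⟨h1, h2⟩
  · rw [Finset.disjoint_left]
    intro i
    simp only [xxS, xxplat, mem_filter, xxd]
    rintro ⟨_, h⟩ ⟨⟨_, h'⟩, _⟩
    omega

theorem xxrun (p : ℕ → ℕ) (c e : ℕ) (hi : ∀ a ≤ e, ∀ b ≤ e, p (c+a) = p (c+b) → a = b)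
    (hp : ∀ s < e, p (c+s) ≤ p (c+s+1) + 1) :
    p c < p (c+e) ∨ ∀ s ≤ e, p (c+s) + s = p c := by
  induction e with
  | zero => right; intro s hs; obtain rfl : s = 0 := by omega
            simp
  | succ e ih =>
    have h1 := hp e (by omega)
    rcases ih (fun a ha b hb => hi a (by omega) b (by omega)) (fun s hs => hp s (by omega)) with h | h
    · left
      have : p c ≠ p (c+(e+1)) := by
        intro h2
        have := hi 0 (by omega) (e+1) le_rfl h2
        omega
      rw [← add_assoc] at *
      omega
    · have he := h e le_rfl
      by_cases h2 : p (c+e+1) + 1 = p (c+e)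
      · right
        intro s hs
        rcases hs.lt_or_eq with h3 | rfl
        · exact h s (by omega)
        · rw [← add_assoc c e 1]; omega
      · left
        by_contra h3
        rw [← add_assoc] at h3
        have h4 := h (p c - p (c+e+1)) (by omega)
        have := hi (p c - p (c+e+1)) (by omega) (e+1) le_rfl (by rw [← add_assoc c e 1]; omega)
        omega

theorem xxrunW {n : ℕ} {K : Finset ℕ} {v : Equiv.Perm (Fin n)} (hv : v ∈ Wset n K)
    {i j : ℕ} (hij : i < j) (hj : j < n) (hb : xxb K (ol n v i) = xxb K (ol n v j))
    (hlt : ol n v j < ol n v i) : ∀ s, i ≤ s → s ≤ j → ol n v s = ol n v j + (j - s) := by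
  set p : ℕ → ℕ := fun c => if h : c < n then ((v⁻¹ ⟨c, h⟩ : Fin n) : ℕ) else 0 with hp
  have hop : ∀ c < n, p c < n ∧ ol n v (p c) = c := by
    intro c hc
    simp [hp, hc, ol]
  have hpo : ∀ i < n, ol n v i < n ∧ p (ol n v i) = i := by
    intro i hi
    simp [hp, hi, ol]
  have hi := hij.trans hj
  set c := ol n v j with hc
  obtain ⟨e, he⟩ : ∃ e, ol n v i = c + e := ⟨ol n v i - c, by omega⟩
  have hpc : p c = j := (hpo j hj).2
  have hpd : p (c + e) = i := by rw [← he]; exact (hpo i hi).2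
  have hdn : c + e < n := by rw [← he]; exact (hpo i hi).1
  have := xxrun p c e (by
      intro a ha b hb hab
      have h1 := (hop (c+a) (by omega)).2
      have h2 := (hop (c+b) (by omega)).2
      rw [hab] at h1
      omega) (by
      intro s hs
      have hk : c + s + 1 ∈ K := xxb_same K (c := c) (d := c + e) (by rw [← hb, he]) _ (by omega) (by omega)
      simp only [Wset, mem_filter, mem_univ, true_and] at hv
      have := hv _ hk (by omega)
      simp only [hp]
      rw [dif_pos (by omega), dif_pos (by omega)]
      exact this)
  rcases this with h | h
  · omega
  · intro s h1 h2
    have h3 := h e le_rfl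
    have h4 := h (j - s) (by omega)
    have h5 : p (c + (j - s)) = s := by omega
    have := (hop (c + (j-s)) (by omega)).2
    rw [h5] at this
    exact this

theorem xxordW {n : ℕ} {K : Finset ℕ} {v : Equiv.Perm (Fin n)} (hv : v ∈ Wset n K)
    {i j : ℕ} (hij : i < j) (hj : j < n) (hb : xxb K (ol n v i) = xxb K (ol n v j)) :
    ol n v j < ol n v i ↔ ∀ s, i ≤ s → s < j → s ∈ xxS K v := by
  constructor
  · intro h s h1 h2
    have r := xxrunW hv hij hj hb h
    have e1 := r s h1 h2.le
    have e2 := r (s+1) (by omega) h2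
    have e3 := r i le_rfl hij.le
    simp only [xxS, xxplat, mem_filter, mem_range, xxex_u]
    refine ⟨⟨by omega, ?_⟩, by omega⟩
    have m1 := xxb_mono K (show ol n v s ≤ ol n v i by omega)
    have m2 := xxb_mono K (show ol n v j ≤ ol n v (s+1) by omega)
    have m3 := xxb_mono K (show ol n v (s+1) ≤ ol n v s by omega)
    omega
  · intro h
    clear hj hb
    induction j, hij using Nat.le_induction with
    | base => 
      have := h i le_rfl (by omega)
      simp only [xxS, mem_filter] at this
      exact this.2
    | succ j hj ih =>
      have h1 := ih (fun s a b => h s a (by omega))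
      have := h j (by omega) (by omega)
      simp only [xxS, mem_filter] at this
      omega

theorem xxperm_eq {n : ℕ} (v w : Equiv.Perm (Fin n)) (h : ∀ i j, v i < v j → w i < w j) : v = w := by
  have h1 : StrictMono (w ∘ v.symm) := by
    intro a b hab
    apply h
    simpa using hab
  have := (StrictMono.range_inj h1 (strictMono_id)).1 (by
    rw [(w.surjective.comp v.symm.surjective).range_eq]; simp)
  ext i
  have := congrFun this (v i)
  simp at this
  rw [this]

theorem xxinj {n : ℕ} {K : Finset ℕ} {v w : Equiv.Perm (Fin n)} (hv : v ∈ Wset n K)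
    (hw : w ∈ Wset n K) (hu : xxu K v = xxu K w) (hS : xxS K v = xxS K w) : v = w := by
  have olv : ∀ (v : Equiv.Perm (Fin n)) (i : Fin n), ol n v i = v i := by
    intro v i; simp [ol]
  have hu' : ∀ i, xxb K (ol n v i) = xxb K (ol n w i) := by
    intro i; rw [← xxex_u, ← xxex_u, hu]
  have key : ∀ i j : Fin n, i < j → (v j < v i ↔ w j < w i) := by
    intro i j hij
    rw [Fin.lt_def, Fin.lt_def, ← olv, ← olv, ← olv, ← olv]
    have hi := hu' i
    have hj := hu' j
    have mono := xxb_mono K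
    have aux : ∀ a b, xxb K a < xxb K b → a < b := fun a b h => mono.reflect_lt h
    rcases lt_trichotomy (xxb K (ol n v i)) (xxb K (ol n v j)) with h | h | h
    · have h1 := aux _ _ h
      have h2 := aux _ _ (hi ▸ hj ▸ h)
      omega
    · rw [xxordW hv hij j.2 h, xxordW hw hij j.2 (by omega), hS]
    · have h1 := aux _ _ h
      have h2 := aux _ _ (hi ▸ hj ▸ h)
      omega
  apply xxperm_eq
  intro i j hij
  rcases lt_trichotomy i j with h | h | h
  · have := key i j h
    have h2 : w i ≠ w j := fun h3 => h.ne (w.injective h3)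
    by_contra h3
    exact absurd (this.2 (lt_of_le_of_ne (not_lt.1 h3) h2.symm)) (not_lt.2 hij.le)
  · subst h; exact absurd hij (lt_irrefl _)
  · exact (key j i h).1 hij

theorem xxcont_apply {m N : ℕ} (u : Fin m → Fin N) (a : ℕ) :
    xxcont u a = #(univ.filter fun i => (u i : ℕ) = a) := by
  rw [xxcont, Finsupp.finsetSum_apply, card_filter]
  simp [Finsupp.single_apply]

theorem xxcont_comp {m N : ℕ} (u : Fin m → Fin N) (σ : Equiv.Perm (Fin m)) :
    xxcont (u ∘ σ) = xxcont u := by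
  unfold xxcont
  exact Equiv.sum_comp σ (fun i => Finsupp.single (u i : ℕ) 1)

theorem xxcont_mono {m N : ℕ} (u w : Fin m → Fin N) (h : xxcont u = xxcont w)
    (hu : Monotone u) (hw : Monotone w) : u = w := by
  have hp : (List.ofFn u).Perm (List.ofFn w) := by
    rw [← Multiset.coe_eq_coe, ← Fin.univ_val_map, ← Fin.univ_val_map]
    ext a
    rw [Multiset.count_map, Multiset.count_map]
    have := DFunLike.congr_fun h (a : ℕ)
    rw [xxcont_apply, xxcont_apply] at this
    simp only [Fin.val_inj] at this
    convert this using 1 <;> (unfold Finset.card Finset.filter; simp only [eq_comm])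
  exact List.ofFn_injective (hp.eq_of_pairwise' (List.pairwise_ofFn.2 fun i j h => hu h.le)
    (List.pairwise_ofFn.2 fun i j h => hw h.le))

theorem xxsort {n : ℕ} (u : Fin n → Fin n) (r : ℕ → ℕ) :
    ∃ v : Equiv.Perm (Fin n), ∀ i j, v i < v j ↔
      (u i < u j ∨ u i = u j ∧ (r i < r j ∨ r i = r j ∧ j < i)) := by
  let g : Fin n → Fin n ×ₗ (ℕ ×ₗ (Fin n)ᵒᵈ) := fun i => toLex (u i, toLex (r i, OrderDual.toDual i))
  have hg : Function.Injective g := by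
    intro i j h
    simpa [g] using (congrArg (fun z => (ofLex (ofLex z).2).2) h)
  refine ⟨(Tuple.sort g)⁻¹, fun i j => ?_⟩
  have hs : StrictMono (g ∘ Tuple.sort g) :=
    (Tuple.monotone_sort g).strictMono_of_injective (hg.comp (Tuple.sort g).injective)
  rw [← hs.lt_iff_lt]
  simp [g, Prod.Lex.toLex_lt_toLex]

theorem xxsurj {n : ℕ} {K : Finset ℕ} (hK : ∀ k ∈ K, 1 ≤ k ∧ k ≤ n - 1) (u : Fin n → Fin n)
    (hu : xxcont u = xxcont (xxu K (1 : Equiv.Perm (Fin n)))) (S : Finset ℕ) (hS : S ⊆ xxplat u) :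
    ∃ v ∈ Wset n K, xxu K v = u ∧ xxS K v = S := by
  let r : ℕ → ℕ := fun i => #((range i).filter (· ∉ S))
  have r_succ : ∀ i, r (i+1) = r i + if i ∈ S then 0 else 1 := by
    intro i
    simp only [r]
    rw [card_filter, card_filter, sum_range_succ]
    simp
  have r_mono : Monotone r := monotone_nat_of_le_succ fun a => by rw [r_succ]; omega
  obtain ⟨v, hv⟩ := xxsort u r
  have hvu : xxu K v = u := by
    have h1 : u ∘ v.symm = xxu K (1 : Equiv.Perm (Fin n)) := by
      apply xxcont_mono
      · rw [xxcont_comp, hu]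
      · intro a b hab
        by_contra h
        have := (hv (v.symm b) (v.symm a)).2 (Or.inl (not_le.1 h))
        simp at this
        exact absurd hab (not_le.2 this)
      · intro a b hab
        exact xxb_mono K hab
    funext i
    have := congrFun h1 (v i)
    simp at this
    rw [this]; rfl
  have hex : ∀ i, ∀ h : i < n, xxex u i = u ⟨i, h⟩ := fun i h => by simp [xxex, h]
  refine ⟨v, ?_, hvu, ?_⟩
  · simp only [Wset, mem_filter, mem_univ, true_and]
    intro k hk hkn
    have hk1 := (hK k hk).1
    by_contra hlt
    set i := v⁻¹ ⟨k, hkn⟩ with hi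
    set j := v⁻¹ (⟨k - 1, by omega⟩ : Fin n) with hj
    have vi : v i = ⟨k, hkn⟩ := by simp [hi]
    have vj : v j = ⟨k-1, by omega⟩ := by simp [hj]
    have hij : (i : ℕ) + 1 < j := by omega
    have ub : u i = u j := by
      rw [← hvu]
      simp only [xxu, vi, vj, xxb_pred K hk hk1]
    have h1 : v j < v i := by rw [vi, vj, Fin.lt_def]; simp; omega
    rw [hv] at h1
    have m1 := r_mono (show (i : ℕ) ≤ i + 1 by omega)
    have m2 := r_mono hij.le
    rcases h1 with h1 | ⟨_, h1⟩
    · rw [ub] at h1; exact absurd h1 (lt_irrefl _)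
    have h2 : r i = r j := by omega
    have h3 : (i : ℕ) ∈ S := by
      have := r_succ i
      by_contra h
      rw [if_neg h] at this
      omega
    have h4 := hS h3
    simp only [xxplat, mem_filter, mem_range] at h4
    let l : Fin n := ⟨i + 1, by omega⟩
    have h5 : u i = u l := by
      have := h4.2
      rw [hex i i.2, hex (i+1) (by omega)] at this
      exact Fin.ext this
    have h6 : v l < v i := (hv l i).2 (Or.inr ⟨h5.symm, Or.inr ⟨by simp only [l]; omega, by
      rw [Fin.lt_def]; simp [l]⟩⟩)
    have h7 : v j < v l := (hv j l).2 (Or.inr ⟨by rw [← h5, ub], Or.inr ⟨by simp only [l]; omega, by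
      rw [Fin.lt_def]; simp only [l]; omega⟩⟩)
    rw [vi, Fin.lt_def] at h6
    rw [vj, Fin.lt_def] at h7
    simp only at h6 h7
    omega
  · ext i
    simp only [xxS, hvu, mem_filter]
    have main : i ∈ xxplat u → (ol n v (i+1) < ol n v i ↔ i ∈ S) := by
      intro h
      simp only [xxplat, mem_filter, mem_range] at h
      have hn : i + 1 < n := by omega
      have e1 : ol n v (i+1) = v ⟨i+1, hn⟩ := by simp [ol, hn]
      have e2 : ol n v i = v ⟨i, by omega⟩ := by simp [ol, show i < n by omega]
      have h5 : u ⟨i+1, hn⟩ = u ⟨i, by omega⟩ := by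
        have := h.2
        rw [hex i (by omega), hex (i+1) (by omega)] at this
        exact Fin.ext this.symm
      rw [e1, e2, ← Fin.lt_def, hv, h5]
      have := r_succ i
      simp only [lt_irrefl, false_or, true_and, Fin.lt_def]
      split_ifs at this with h7
      · simp only [h7, iff_true]; omega
      · simp only [h7, iff_false]; omega
    constructor
    · rintro ⟨h1, h2⟩; exact (main h1).1 h2
    · intro h; exact ⟨hS h, (main (hS h)).2 h⟩

theorem xxreps {n : ℕ} {K : Finset ℕ} (hK : ∀ k ∈ K, 1 ≤ k ∧ k ≤ n - 1) (v : Equiv.Perm (Fin n)) :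
    v ∈ WKreps n K ↔ v ∈ Wset n K ∧ xxS K v = ∅ := by
  constructor
  · intro h
    have hW : v ∈ Wset n K := by
      simp only [Wset, WKreps, mem_filter, mem_univ, true_and] at h ⊢
      intro k hk hkn
      have := h k hk hkn
      rw [Fin.lt_def] at this
      omega
    refine ⟨hW, ?_⟩
    rw [Finset.eq_empty_iff_forall_notMem]
    intro i hi
    simp only [xxS, xxplat, mem_filter, mem_range, xxex_u] at hi
    obtain ⟨⟨h1, h2⟩, h3⟩ := hi
    have hr := xxrunW hW (Nat.lt_succ_self i) (by omega) h2 h3 i le_rfl (by omega)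
    have hkK : ol n v i ∈ K := xxb_same K h2.symm _ h3 le_rfl
    simp only [WKreps, mem_filter, mem_univ, true_and] at h
    have e1 : ol n v (i+1) = v ⟨i+1, by omega⟩ := by simp [ol, show i + 1 < n by omega]
    have e2 : ol n v i = v ⟨i, by omega⟩ := by simp [ol, show i < n by omega]
    have h4 := h _ hkK (by rw [e2]; exact Fin.is_lt _)
    have f2 : (⟨ol n v i, by rw [e2]; exact Fin.is_lt _⟩ : Fin n) = v ⟨i, by omega⟩ := Fin.ext e2
    have f1 : (⟨ol n v i - 1, by rw [e2]; omega⟩ : Fin n) = v ⟨i+1, by omega⟩ :=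
      Fin.ext (by simp only [Nat.succ_eq_add_one] at hr; simp only; omega)
    rw [f1, f2] at h4
    simp at h4
  · rintro ⟨h, hS⟩
    simp only [WKreps, mem_filter, mem_univ, true_and]
    intro k hk hkn
    have hW := h
    simp only [Wset, mem_filter, mem_univ, true_and] at hW
    have h1 := hW k hk hkn
    have hk1 := (hK k hk).1
    set i := v⁻¹ ⟨k, hkn⟩ with hi
    set j := v⁻¹ (⟨k - 1, by omega⟩ : Fin n) with hj
    have vi : v i = ⟨k, hkn⟩ := by simp [hi]
    have vj : v j = ⟨k-1, by omega⟩ := by simp [hj]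
    by_contra hlt
    have hne : i ≠ j := by
      intro e
      rw [e, vj] at vi
      have := Fin.val_eq_of_eq vi
      simp only at this
      omega
    have hji : (j : ℕ) = i + 1 := by
      rw [Fin.lt_def] at hlt
      have : (i : ℕ) ≠ j := fun e => hne (Fin.ext e)
      omega
    have o1 : ol n v i = k := by simp [ol, vi]
    have o2 : ol n v (i+1) = k - 1 := by rw [← hji]; simp [ol, vj]
    have : (i : ℕ) ∈ xxS K v := by
      simp only [xxS, xxplat, mem_filter, mem_range, xxex_u, o1, o2]
      exact ⟨⟨by omega, (xxb_pred K hk hk1).symm⟩, by omega⟩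
    rw [hS] at this
    simp at this

theorem xxFw_eq {R : Type*} [CommRing R] (t : R) {m : ℕ} (u : Fin (m+1) → Fin (m+1)) :
    xxFw t m (xxex u) = ∑ S ∈ (xxplat u).powerset,
      t ^ (#((range m).filter (xxd (xxex u))) + #S) := by
  have h1 : xxFw t m (xxex u) = t ^ (#((range m).filter (xxd (xxex u)))) * (t + 1) ^ #(xxplat u) := by
    unfold xxFw xxplat
    rw [← Finset.prod_const, ← Finset.prod_const, Finset.prod_filter, Finset.prod_filter,
      show m + 1 - 1 = m from rfl, ← Finset.prod_mul_distrib]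
    apply Finset.prod_congr rfl
    intro i _
    unfold xxd
    split_ifs <;> first | omega | ring
  rw [h1, ← Finset.sum_pow_mul_eq_add_pow, Finset.mul_sum]
  apply Finset.sum_congr rfl
  intro S _
  rw [pow_add]; simp

theorem xxu_cont {n : ℕ} (K : Finset ℕ) (v : Equiv.Perm (Fin n)) :
    xxcont (xxu K v) = xxcont (xxu K (1 : Equiv.Perm (Fin n))) :=
  xxcont_comp (xxu K (1 : Equiv.Perm (Fin n))) v

theorem xxlhs {m : ℕ} {K : Finset ℕ} (hK : ∀ k ∈ K, 1 ≤ k ∧ k ≤ m + 1 - 1) :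
    ∑ v ∈ Wset (m+1) K, (X : ℤ[X]) ^ des (m+1) v =
    ∑ u : Fin (m+1) → Fin (m+1) with xxcont u = xxcont (xxu K (1 : Equiv.Perm (Fin (m+1)))),
      xxFw (X : ℤ[X]) m (xxex u) := by
  simp only [xxFw_eq]
  rw [Finset.sum_sigma']
  apply Finset.sum_nbij (fun v => (⟨xxu K v, xxS K v⟩ : (_ : Fin (m+1) → Fin (m+1)) × Finset ℕ))
  · intro v hv
    simp only [mem_sigma, mem_filter, mem_univ, true_and, mem_powerset]
    exact ⟨xxu_cont K v, filter_subset _ _⟩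
  · intro v hv w hw h
    simp only [Sigma.mk.injEq, heq_eq_eq] at h
    exact xxinj hv hw h.1 h.2
  · rintro ⟨u, S⟩ h
    simp only [coe_sigma, Set.mem_sigma_iff, mem_coe, mem_filter, mem_univ, true_and, mem_powerset] at h
    obtain ⟨v, hv, rfl, rfl⟩ := xxsurj hK u h.1 S h.2
    exact ⟨v, hv, rfl⟩
  · intro v hv
    rw [xxdes K v]; rfl

theorem xxhat_iff {m : ℕ} {K : Finset ℕ} (v : Equiv.Perm (Fin (m+1))) (hS : xxS K v = ∅) :
    (NoDoubleDescent (m+1) v ∧ NoFinalDescent (m+1) v) ↔ xxhat m (xxd (xxex (xxu K v))) := by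
  have key : ∀ i, i ∈ DesSet (m+1) v ↔ i < m ∧ xxd (xxex (xxu K v)) i := by
    intro i
    simp only [DesSet, mem_filter, mem_range, xxd, xxex_u, Nat.add_sub_cancel]
    refine and_congr_right fun hi => ⟨fun h => ?_, fun h => (xxb_mono K).reflect_lt h⟩
    refine lt_of_le_of_ne (xxb_mono K h.le) fun e => ?_
    have : i ∈ xxS K v := by
      simp only [xxS, xxplat, mem_filter, mem_range, xxex_u]
      exact ⟨⟨hi, e.symm⟩, h⟩
    rw [hS] at this
    simp at this
  simp only [NoDoubleDescent, NoFinalDescent, key, xxhat]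
  constructor
  · rintro ⟨h1, h2⟩ i hi hd
    have h3 : i + 1 < m := by
      by_contra h
      apply h2
      obtain rfl : m = i + 1 := by omega
      exact ⟨by omega, hd⟩
    exact ⟨h3, fun h => h1 i ⟨hi, hd⟩ ⟨h3, h⟩⟩
  · intro h
    refine ⟨fun i hi h2 => (h i hi.1 hi.2).2 h2.2, fun h2 => ?_⟩
    have := (h _ h2.1 h2.2).1
    omega

theorem xxrhs {m : ℕ} {K : Finset ℕ} (hK : ∀ k ∈ K, 1 ≤ k ∧ k ≤ m + 1 - 1) :
    ∑ w ∈ (WKreps (m+1) K).filter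
          (fun w => NoDoubleDescent (m+1) w ∧ NoFinalDescent (m+1) w),
        (X : ℤ[X]) ^ des (m+1) w * (1 + X) ^ (m + 1 - 1 - 2 * des (m+1) w) =
    ∑ u : Fin (m+1) → Fin (m+1) with xxcont u = xxcont (xxu K (1 : Equiv.Perm (Fin (m+1)))),
      xxhw (X : ℤ[X]) m (xxd (xxex u)) := by
  rw [Finset.sum_filter]
  apply Finset.sum_nbij (fun v => xxu K v)
  · intro v hv
    simp only [mem_filter, mem_univ, true_and]
    exact xxu_cont K v
  · intro v hv w hw h
    have hv' := (xxreps hK v).1 hv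
    have hw' := (xxreps hK w).1 hw
    exact xxinj hv'.1 hw'.1 h (hv'.2.trans hw'.2.symm)
  · intro u h
    simp only [mem_coe, mem_filter, mem_univ, true_and] at h
    obtain ⟨v, hv, rfl, hS⟩ := xxsurj hK u h ∅ (empty_subset _)
    exact ⟨v, (xxreps hK v).2 ⟨hv, hS⟩, rfl⟩
  · intro v hv
    have hv' := (xxreps hK v).1 hv
    rw [xxhw, xxdes K v, hv'.2]
    simp only [xxhat_iff v hv'.2, card_empty, add_zero, Nat.add_sub_cancel]

theorem main_theorem_hat (n : ℕ) (K : Finset ℕ)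
    (hK : ∀ k ∈ K, 1 ≤ k ∧ k ≤ n - 1) :
    ∑ v ∈ Wset n K, (X : Polynomial ℕ) ^ des n v =
      ∑ w ∈ (WKreps n K).filter
          (fun w => NoDoubleDescent n w ∧ NoFinalDescent n w),
        (X : Polynomial ℕ) ^ des n w * (1 + X) ^ (n - 1 - 2 * des n w) := by
  cases n with
  | zero =>
    have h1 : Wset 0 K = univ := by
      ext v; simp [Wset]
    have h2 : (WKreps 0 K).filter (fun w => NoDoubleDescent 0 w ∧ NoFinalDescent 0 w) = univ := by
      ext v; simp [WKreps, NoDoubleDescent, NoFinalDescent, DesSet]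
    rw [h1, h2]
    simp [des, DesSet]
  | succ m =>
    apply Polynomial.map_injective (Nat.castRingHom ℤ) Nat.cast_injective
    have := (xxlhs hK).trans ((xxcontent_eq m (m+1) _).trans (xxrhs hK).symm)
    simpa [Polynomial.map_sum] using this
end
end
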